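/- Fix ρ ∈ [0,1]^K with Σ_k ρ_k = 1, and a sequence αₙ ∈ (0,1) with lim_n n·αₙ = ∞ and lim_n n·αₙ² = 0. Then for every μ ∈ (0,1) there exists a sequence of (n, M₁,…,M_K, L₁,…,L_K) codes such that: (i) lim_n P_eⁿ = 0; (ii) lim_n D(Q̂ⁿ‖Q_∅^{⊗n}) = 0; (iii) for every k, lim_n (log M_k)/√(n·D(Q̂ⁿ‖Q_∅^{⊗n})) = (1−μ)·√(2/χ(ρ))·ρ_k·D(P_k‖P_∅); and (iv) for every k, lim_n (log L_k)/√(n·D(Q̂ⁿ‖Q_∅^{⊗n})) = √(2/χ(ρ))·ρ_k·max{(1+μ)D(Q_k‖Q_∅) − (1−μ)D(P_k‖P_∅), 0}. Here χ(ρ) := Σ_z (Σ_k ρ_k(Q_k(z) − Q_∅(z)))² / Q_∅(z). -/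

import Mathlib

open Finset Filter
open scoped Topology Classical

noncomputable section

/-- `P` is a probability distribution on the finite type `Z`. -/
def IsDist {Z : Type*} [Fintype Z] (P : Z → ℝ) : Prop :=
  (∀ z, 0 ≤ P z) ∧ ∑ z, P z = 1

/-- Kullback–Leibler divergence `D(P‖Q)` (natural logarithm). -/
def klDiv {Z : Type*} [Fintype Z] (P Q : Z → ℝ) : ℝ :=
  ∑ z, P z * Real.log (P z / Q z)

/-- `P` is absolutely continuous w.r.t. `Q`. -/
def AbsCont {Z : Type*} (P Q : Z → ℝ) : Prop :=
  ∀ z, Q z = 0 → P z = 0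

/-- The binary input vector having ones exactly at the indices in `U`. -/
def xU {K : ℕ} (U : Finset (Fin K)) : Fin K → Bool :=
  fun k => decide (k ∈ U)

/-- Bernoulli distribution on `Bool` with success probability `p`. -/
def bern (p : ℝ) : Bool → ℝ := fun b => if b then p else 1 - p

/-- `n`-fold memoryless extension of a channel `W`. -/
def prodChannel {A Z : Type*} (W : A → Z → ℝ) (n : ℕ)
    (x : Fin n → A) (z : Fin n → Z) : ℝ :=
  ∏ j, W (x j) (z j)

/-- `χ(ρ) := Σ_z (Σ_k ρ_k (Q_k(z) - Q_∅(z)))² / Q_∅(z)` for the warden channel `Wz`. -/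
def chiRho {K : ℕ} {Z : Type*} [Fintype Z] (Wz : (Fin K → Bool) → Z → ℝ)
    (ρ : Fin K → ℝ) : ℝ :=
  ∑ z, (∑ k, ρ k * (Wz (xU {k}) z - Wz (xU ∅) z)) ^ 2 / Wz (xU ∅) z

/-- The distribution `Q̂ⁿ` induced at the warden by a code with encoders `enc`, uniform
messages and uniform keys. -/
def Qhat {K n : ℕ} {Z : Type*} [Fintype Z] (Wz : (Fin K → Bool) → Z → ℝ)
    (M L : Fin K → ℕ) (enc : ∀ k, Fin (M k) × Fin (L k) → Fin n → Bool)
    (z : Fin n → Z) : ℝ :=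
  (∏ k, ((M k : ℝ) * (L k : ℝ)))⁻¹ *
    ∑ m : ∀ k, Fin (M k), ∑ l : ∀ k, Fin (L k),
      prodChannel Wz n (fun j k => enc k (m k, l k) j) z

/-- The average probability of decoding error of a code over the `n`-fold extension of
the channel `Wy`, with uniform messages and uniform keys. -/
def Pe {K n : ℕ} {Y : Type*} [Fintype Y] (Wy : (Fin K → Bool) → Y → ℝ)
    (M L : Fin K → ℕ) (enc : ∀ k, Fin (M k) × Fin (L k) → Fin n → Bool)
    (dec : (Fin n → Y) → (∀ k, Fin (L k)) → ∀ k, Fin (M k)) : ℝ :=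
  (∏ k, ((M k : ℝ) * (L k : ℝ)))⁻¹ *
    ∑ m : ∀ k, Fin (M k), ∑ l : ∀ k, Fin (L k), ∑ y : Fin n → Y,
      prodChannel Wy n (fun j k => enc k (m k, l k) j) y *
        (if dec y l = m then 0 else 1)

/-- `δₙ = D(Q̂ⁿ ‖ Q_∅^{⊗n})`. -/
def deltaN {K n : ℕ} {Z : Type*} [Fintype Z] (Wz : (Fin K → Bool) → Z → ℝ)
    (M L : Fin K → ℕ) (enc : ∀ k, Fin (M k) × Fin (L k) → Fin n → Bool) : ℝ :=
  klDiv (Qhat Wz M L enc) (fun z : Fin n → Z => ∏ j, Wz (xU ∅) (z j))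

set_option linter.unusedSectionVars false
set_option linter.unusedVariables false

/-- Kronecker delta. -/
def kd {X : Type*} (a b : X) : ℝ := if a = b then 1 else 0

lemma kd_nonneg {X : Type*} (a b : X) : 0 ≤ kd a b := by
  unfold kd; split_ifs <;> norm_num

lemma kd_self {X : Type*} (a : X) : kd a a = 1 := by simp [kd]

lemma kd_pi {J X : Type*} [Fintype J] (x y : J → X) : ∏ j, kd (x j) (y j) = kd x y := by
  unfold kd
  rw [Fintype.prod_ite_zero]
  simp [funext_iff]

lemma sum_kd_mul {X : Type*} [Fintype X] (a : X) (f : X → ℝ) : ∑ x, kd a x * f x = f a := by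
  simp [kd]

/-- The conditional law of a second codeword given the first one, for a codebook with
indices `a`, `b`. -/
def tau {I X : Type*} (p : X → ℝ) (a b : I) (x x' : X) : ℝ :=
  if a = b then kd x' x else p x'

lemma single_pair {I X : Type*} [Fintype I] [DecidableEq I] [Fintype X] (p : X → ℝ)
    (hp : ∑ x, p x = 1) (a b : I) (x x' : X) :
    ∑ c : I → X, (∏ i, p (c i)) * (kd (c a) x * kd (c b) x') = p x * tau p a b x x' := by
  have h1 : ∀ c : I → X, (∏ i, p (c i)) * (kd (c a) x * kd (c b) x') =
      ∏ i, (p (c i) * ((if i = a then kd (c i) x else 1) * (if i = b then kd (c i) x' else 1))) := by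
    intro c
    rw [Finset.prod_mul_distrib, Finset.prod_mul_distrib, Fintype.prod_ite_eq', Fintype.prod_ite_eq']
  simp_rw [h1]
  rw [← Fintype.prod_sum (fun i v => p v * ((if i = a then kd v x else 1) * (if i = b then kd v x' else 1)))]
  unfold tau
  by_cases hab : a = b
  · subst hab
    rw [Finset.prod_eq_single a]
    · simp only [if_true]
      unfold kd
      by_cases hx : x' = x
      · simp [hx]
      · simp only [hx, if_false, mul_zero]
        apply Finset.sum_eq_zero
        intro v _
        by_cases hv : v = x
        · subst hv; simp [Ne.symm hx]
        · simp [hv]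
    · intro i _ hi
      simp [hi, hp]
    · simp
  · rw [Finset.prod_eq_mul a b hab]
    · simp [hab, Ne.symm hab, kd]
    · rintro i _ ⟨h1, h2⟩
      simp [h1, h2, hp]
    · simp
    · simp

section oneshot
variable {K : ℕ} {I : Fin K → Type} [∀ k, Fintype (I k)] [∀ k, DecidableEq (I k)]
  {X : Type} [Fintype X]

/-- Weight of a codebook. -/
def wt (p : Fin K → X → ℝ) (c : ∀ k, I k → X) : ℝ := ∏ k, ∏ i, p k (c k i)

lemma wt_nonneg (p : Fin K → X → ℝ) (hp0 : ∀ k x, 0 ≤ p k x) (c : ∀ k, I k → X) : 0 ≤ wt p c :=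
  Finset.prod_nonneg fun k _ => Finset.prod_nonneg fun i _ => hp0 k _

lemma wt_sum (p : Fin K → X → ℝ) (hp : ∀ k, ∑ x, p k x = 1) :
    ∑ c : ∀ k, I k → X, wt p c = 1 := by
  unfold wt
  rw [← Fintype.prod_sum (fun k (ck : I k → X) => ∏ i, p k (ck i))]
  apply Finset.prod_eq_one
  intro k _
  rw [← Fintype.prod_sum (fun (_ : I k) x => p k x)]
  simp [hp]

lemma pair_law (p : Fin K → X → ℝ) (hp : ∀ k, ∑ x, p k x = 1) (i i' : ∀ k, I k)
    (x x' : Fin K → X) :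
    ∑ c : ∀ k, I k → X, wt p c * (kd (fun k => c k (i k)) x * kd (fun k => c k (i' k)) x') =
      ∏ k, (p k (x k) * tau (p k) (i k) (i' k) (x k) (x' k)) := by
  simp_rw [← kd_pi, wt, ← Finset.prod_mul_distrib]
  rw [← Fintype.prod_sum (fun k (ck : I k → X) => (∏ j, p k (ck j)) *
    (kd (ck (i k)) (x k) * kd (ck (i' k)) (x' k)))]
  refine Finset.prod_congr rfl fun k _ => ?_
  exact single_pair (p k) (hp k) _ _ _ _

lemma pair_exp (p : Fin K → X → ℝ) (hp : ∀ k, ∑ x, p k x = 1) (i i' : ∀ k, I k)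
    (G : (Fin K → X) → (Fin K → X) → ℝ) :
    ∑ c : ∀ k, I k → X, wt p c * G (fun k => c k (i k)) (fun k => c k (i' k)) =
      ∑ x, ∑ x', (∏ k, (p k (x k) * tau (p k) (i k) (i' k) (x k) (x' k))) * G x x' := by
  simp_rw [← pair_law p hp i i', Finset.sum_mul]
  rw [Finset.sum_congr rfl (fun x _ => Finset.sum_comm), Finset.sum_comm]
  refine Finset.sum_congr rfl fun c _ => ?_
  have : ∀ x x', wt p c * (kd (fun k => c k (i k)) x * kd (fun k => c k (i' k)) x') * G x x' =
     kd (fun k => c k (i k)) x * (kd (fun k => c k (i' k)) x' * (wt p c * G x x')) := by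
    intros; ring
  simp_rw [this, ← Finset.mul_sum, sum_kd_mul]

lemma single_exp (p : Fin K → X → ℝ) (hp : ∀ k, ∑ x, p k x = 1) (i : ∀ k, I k)
    (G : (Fin K → X) → ℝ) :
    ∑ c : ∀ k, I k → X, wt p c * G (fun k => c k (i k)) =
      ∑ x, (∏ k, p k (x k)) * G x := by
  rw [pair_exp p hp i i (fun x _ => G x)]
  refine Finset.sum_congr rfl fun x _ => ?_
  rw [← Finset.sum_mul]
  congr 1
  simp only [tau, if_true, Finset.prod_mul_distrib, kd_pi, ← Finset.mul_sum]
  rw [Finset.sum_eq_single x (fun b _ hb => by simp [kd, hb]) (by simp), kd_self, mul_one]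

/-- Output kernel where inputs in `T` are fixed and others averaged. -/
def kap (p : Fin K → X → ℝ) (T : Finset (Fin K)) (x x' : Fin K → X) : ℝ :=
  ∏ k, (if k ∈ T then kd (x' k) (x k) else p k (x' k))

def WT {O : Type} (p : Fin K → X → ℝ) (W : (Fin K → X) → O → ℝ) (T : Finset (Fin K))
    (x : Fin K → X) (z : O) : ℝ := ∑ x', kap p T x x' * W x' z

lemma kap_nonneg (p : Fin K → X → ℝ) (hp0 : ∀ k x, 0 ≤ p k x) (T : Finset (Fin K))
    (x x' : Fin K → X) : 0 ≤ kap p T x x' := by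
  refine Finset.prod_nonneg fun k _ => ?_
  split_ifs
  · exact kd_nonneg _ _
  · exact hp0 _ _

lemma WT_nonneg {O : Type} (p : Fin K → X → ℝ) (hp0 : ∀ k x, 0 ≤ p k x)
    (W : (Fin K → X) → O → ℝ) (hW : ∀ x z, 0 ≤ W x z) (T : Finset (Fin K))
    (x : Fin K → X) (z : O) : 0 ≤ WT p W T x z :=
  Finset.sum_nonneg fun x' _ => mul_nonneg (kap_nonneg p hp0 T x x') (hW _ _)

lemma jensen_rpow {C : Type*} (A : Finset C) (u g : C → ℝ) (hu : ∀ c ∈ A, 0 ≤ u c)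
    (hg : ∀ c ∈ A, 0 ≤ g c) (S V s : ℝ) (hS : ∑ c ∈ A, u c = S) (hV : ∑ c ∈ A, u c * g c ≤ S * V)
    (hV0 : 0 ≤ V) (hs : 0 < s) (hs1 : s ≤ 1) :
    ∑ c ∈ A, u c * g c ^ s ≤ S * V ^ s := by
  have hS0 : 0 ≤ S := hS ▸ Finset.sum_nonneg hu
  rcases hS0.eq_or_lt with h0 | hpos
  · have : ∀ c ∈ A, u c = 0 := (Finset.sum_eq_zero_iff_of_nonneg hu).1 (hS.trans h0.symm)
    rw [← h0, zero_mul]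
    exact (Finset.sum_eq_zero fun c hc => by rw [this c hc, zero_mul]).le
  · have := (Real.concaveOn_rpow hs.le hs1).le_map_sum (t := A) (w := fun c => u c / S) (p := g)
      (fun c hc => div_nonneg (hu c hc) hS0) (by rw [← Finset.sum_div, hS, div_self hpos.ne'])
      (fun c hc => hg c hc)
    simp only [smul_eq_mul] at this
    have e1 : ∑ c ∈ A, u c / S * g c ^ s = (∑ c ∈ A, u c * g c ^ s) / S := by
      rw [Finset.sum_div]; exact Finset.sum_congr rfl fun c _ => by ring
    have e2 : ∑ c ∈ A, u c / S * g c = (∑ c ∈ A, u c * g c) / S := by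
      rw [Finset.sum_div]; exact Finset.sum_congr rfl fun c _ => by ring
    rw [e1, e2] at this
    have h3 : ((∑ c ∈ A, u c * g c) / S) ^ s ≤ V ^ s := by
      apply Real.rpow_le_rpow _ _ hs.le
      · exact div_nonneg (Finset.sum_nonneg fun c hc => mul_nonneg (hu c hc) (hg c hc)) hS0
      · rw [div_le_iff₀ hpos]; linarith
    have h4 := this.trans h3
    rw [div_le_iff₀ hpos] at h4
    linarith

lemma rpow_sum_le_sum {C : Type*} (A : Finset C) (g : C → ℝ) (hg : ∀ c, 0 ≤ g c) (s : ℝ)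
    (hs : 0 < s) (hs1 : s ≤ 1) : (∑ c ∈ A, g c) ^ s ≤ ∑ c ∈ A, g c ^ s := by
  induction A using Finset.induction_on with
  | empty => simp [hs.ne']
  | insert a A ha ih =>
    rw [Finset.sum_insert ha, Finset.sum_insert ha]
    have h := NNReal.rpow_add_le_add_rpow (⟨g a, hg a⟩) (⟨∑ c ∈ A, g c, Finset.sum_nonneg fun c _ => hg c⟩) hs.le hs1
    have h' : (g a + ∑ c ∈ A, g c) ^ s ≤ g a ^ s + (∑ c ∈ A, g c) ^ s := by
      exact_mod_cast h
    linarith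

/-- The induced output distribution. -/
def Qh {O : Type} (W : (Fin K → X) → O → ℝ) (c : ∀ k, I k → X) (z : O) : ℝ :=
  (∏ k, (Fintype.card (I k) : ℝ))⁻¹ * ∑ i : ∀ k, I k, W (fun k => c k (i k)) z

lemma Qh_nonneg {O : Type} (W : (Fin K → X) → O → ℝ) (hW : ∀ x z, 0 ≤ W x z)
    (c : ∀ k, I k → X) (z : O) : 0 ≤ Qh W c z :=
  mul_nonneg (inv_nonneg.2 (Finset.prod_nonneg fun _ _ => Nat.cast_nonneg _))
    (Finset.sum_nonneg fun _ _ => hW _ _)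

lemma cond_exp_le {O : Type} [∀ k, Nonempty (I k)] (p : Fin K → X → ℝ) (hp : ∀ k, ∑ x, p k x = 1)
    (hp0 : ∀ k x, 0 ≤ p k x)
    (W : (Fin K → X) → O → ℝ) (hW : ∀ x z, 0 ≤ W x z) (ν : Fin K → ℝ)
    (hν : ∀ k, ν k = (Fintype.card (I k) : ℝ)⁻¹ ∨
      (ν k = 0 ∧ ∀ x x', p k x * kd x' x = p k x * p k x'))
    (i : ∀ k, I k) (x : Fin K → X) (z : O) :
    ∑ c : ∀ k, I k → X, (wt p c * kd (fun k => c k (i k)) x) * Qh W c z ≤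
      (∏ k, p k (x k)) * ∑ T : Finset (Fin K), (∏ k ∈ T, ν k) * WT p W T x z := by
  have hcard : ∀ k, (0 : ℝ) < Fintype.card (I k) := fun k => by
    exact_mod_cast Fintype.card_pos
  have e1 : ∑ c : ∀ k, I k → X, (wt p c * kd (fun k => c k (i k)) x) * Qh W c z =
      ∑ x', (∏ k, (p k (x k) * ((Fintype.card (I k) : ℝ)⁻¹ *
        ∑ b : I k, tau (p k) (i k) b (x k) (x' k)))) * W x' z := by
    unfold Qh
    simp_rw [Finset.mul_sum]
    rw [Finset.sum_comm]
    have : ∀ i' : ∀ k, I k, ∑ c : ∀ k, I k → X, (wt p c * kd (fun k => c k (i k)) x) *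
        ((∏ k, (Fintype.card (I k) : ℝ))⁻¹ * W (fun k => c k (i' k)) z) =
        ∑ x', (∏ k, (p k (x k) * ((Fintype.card (I k) : ℝ)⁻¹ *
          tau (p k) (i k) (i' k) (x k) (x' k)))) * W x' z := by
      intro i'
      have h := pair_exp p hp i i' (fun u v => kd u x * ((∏ k, (Fintype.card (I k) : ℝ))⁻¹ * W v z))
      simp_rw [← mul_assoc] at h ⊢
      rw [h]
      rw [Finset.sum_comm]
      refine Finset.sum_congr rfl fun x' _ => ?_
      rw [Finset.sum_eq_single x]
      · rw [kd_self]
        congr 1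
        rw [← Finset.prod_inv_distrib, mul_one, ← Finset.prod_mul_distrib]
        exact Finset.prod_congr rfl fun k _ => by ring
      · intro b _ hb
        simp [kd, hb]
      · simp
    simp_rw [this]
    rw [Finset.sum_comm]
    refine Finset.sum_congr rfl fun x' _ => ?_
    rw [Fintype.prod_sum, Finset.sum_mul]
  rw [e1]
  have e2 : (∏ k, p k (x k)) * ∑ T : Finset (Fin K), (∏ k ∈ T, ν k) * WT p W T x z =
      ∑ x', (∏ k, (p k (x k) * (ν k * kd (x' k) (x k) + p k (x' k)))) * W x' z := by
    simp_rw [Finset.prod_mul_distrib, Fintype.prod_add, mul_assoc, ← Finset.mul_sum]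
    congr 1
    unfold WT
    simp_rw [Finset.sum_mul, Finset.mul_sum]
    rw [Finset.sum_comm]
    refine Finset.sum_congr rfl fun x' _ => Finset.sum_congr rfl fun T _ => ?_
    have : kap p T x x' = (∏ k ∈ T, kd (x' k) (x k)) * ∏ k ∈ Tᶜ, p k (x' k) := by
      unfold kap
      rw [Finset.prod_ite]
      congr 1
      · apply Finset.prod_congr _ (fun _ _ => rfl); ext; simp
      · apply Finset.prod_congr _ (fun _ _ => rfl); ext; simp
    rw [this, Finset.prod_mul_distrib]
    ring
  rw [e2]
  refine Finset.sum_le_sum fun x' _ => mul_le_mul_of_nonneg_right ?_ (hW _ _)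
  have htau : ∀ k, ∑ b : I k, tau (p k) (i k) b (x k) (x' k) =
      kd (x' k) (x k) + ((Fintype.card (I k) : ℝ) - 1) * p k (x' k) := by
    intro k
    rw [← Finset.add_sum_erase _ _ (Finset.mem_univ (i k))]
    congr 1
    · simp [tau]
    · rw [Finset.sum_congr rfl (g := fun _ => p k (x' k))]
      · rw [Finset.sum_const, Finset.card_erase_of_mem (Finset.mem_univ _), Finset.card_univ,
          nsmul_eq_mul, Nat.cast_sub Fintype.card_pos]
        simp
      · intro b hb
        simp [tau, Ne.symm (Finset.ne_of_mem_erase hb)]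
  refine Finset.prod_le_prod (fun k _ => ?_) (fun k _ => ?_)
  · refine mul_nonneg (hp0 _ _) (mul_nonneg (inv_nonneg.2 (hcard k).le) ?_)
    refine Finset.sum_nonneg fun b _ => ?_
    unfold tau
    split_ifs
    · exact kd_nonneg _ _
    · exact hp0 _ _
  · rw [htau]
    rcases hν k with h | ⟨h, hpm⟩
    · rw [h]
      refine mul_le_mul_of_nonneg_left ?_ (hp0 _ _)
      rw [mul_add, ← mul_assoc, mul_sub, inv_mul_cancel₀ (hcard k).ne']
      have := mul_nonneg (inv_nonneg.2 (hcard k).le) (hp0 k (x' k))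
      nlinarith
    · rw [h]
      have h3 := hpm (x k) (x' k)
      have : p k (x k) * ((Fintype.card (I k) : ℝ)⁻¹ * (kd (x' k) (x k) +
          ((Fintype.card (I k) : ℝ) - 1) * p k (x' k))) = p k (x k) * p k (x' k) := by
        have : p k (x k) * ((Fintype.card (I k) : ℝ)⁻¹ * (kd (x' k) (x k) +
          ((Fintype.card (I k) : ℝ) - 1) * p k (x' k))) =
          (Fintype.card (I k) : ℝ)⁻¹ * (p k (x k) * kd (x' k) (x k) +
          ((Fintype.card (I k) : ℝ) - 1) * (p k (x k) * p k (x' k))) := by ring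
        rw [this, h3]
        have := (hcard k).ne'
        field_simp
        ring
      rw [this]; simp

lemma exp_Qh_rpow {O : Type} [∀ k, Nonempty (I k)] (p : Fin K → X → ℝ)
    (hp : ∀ k, ∑ x, p k x = 1) (hp0 : ∀ k x, 0 ≤ p k x)
    (W : (Fin K → X) → O → ℝ) (hW : ∀ x z, 0 ≤ W x z) (ν : Fin K → ℝ) (hν0 : ∀ k, 0 ≤ ν k)
    (hν : ∀ k, ν k = (Fintype.card (I k) : ℝ)⁻¹ ∨
      (ν k = 0 ∧ ∀ x x', p k x * kd x' x = p k x * p k x'))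
    (s : ℝ) (hs : 0 < s) (hs1 : s ≤ 1) (z : O) :
    ∑ c : ∀ k, I k → X, wt p c * (Qh W c z * Qh W c z ^ s) ≤
      ∑ x, (∏ k, p k (x k)) * (W x z * ∑ T : Finset (Fin K), ((∏ k ∈ T, ν k) * WT p W T x z) ^ s) := by
  have hcard : ∀ k, (0 : ℝ) < Fintype.card (I k) := fun k => by
    exact_mod_cast Fintype.card_pos
  have key : ∀ i : ∀ k, I k, ∑ c : ∀ k, I k → X, wt p c * (W (fun k => c k (i k)) z * Qh W c z ^ s) ≤
      ∑ x, (∏ k, p k (x k)) * (W x z * ∑ T : Finset (Fin K), ((∏ k ∈ T, ν k) * WT p W T x z) ^ s) := by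
    intro i
    have e : ∑ c : ∀ k, I k → X, wt p c * (W (fun k => c k (i k)) z * Qh W c z ^ s) =
        ∑ x, W x z * ∑ c : ∀ k, I k → X, (wt p c * kd (fun k => c k (i k)) x) * Qh W c z ^ s := by
      simp_rw [Finset.mul_sum]
      rw [Finset.sum_comm]
      refine Finset.sum_congr rfl fun c _ => ?_
      rw [← sum_kd_mul (fun k => c k (i k)) (fun x => wt p c * (W x z * Qh W c z ^ s))]
      exact Finset.sum_congr rfl fun x _ => by ring
    rw [e]
    refine Finset.sum_le_sum fun x _ => ?_
    rw [mul_left_comm]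
    refine mul_le_mul_of_nonneg_left ?_ (hW _ _)
    have hterm : ∀ T : Finset (Fin K), 0 ≤ (∏ k ∈ T, ν k) * WT p W T x z := fun T =>
      mul_nonneg (Finset.prod_nonneg fun k _ => hν0 k) (WT_nonneg p hp0 W hW T x z)
    refine (jensen_rpow _ _ _ ?_ ?_ (∏ k, p k (x k)) (∑ T : Finset (Fin K), (∏ k ∈ T, ν k) * WT p W T x z)
      s ?_ (cond_exp_le p hp hp0 W hW ν hν i x z) ?_ hs hs1).trans ?_
    · intro c _
      exact mul_nonneg (wt_nonneg p hp0 c) (kd_nonneg _ _)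
    · intro c _
      exact Qh_nonneg W hW c z
    · rw [single_exp p hp i (fun u => kd u x)]
      rw [Finset.sum_eq_single x]
      · simp [kd]
      · intro b _ hb; simp [kd, hb]
      · simp
    · exact Finset.sum_nonneg fun T _ => hterm T
    · refine mul_le_mul_of_nonneg_left ?_ (Finset.prod_nonneg fun k _ => hp0 _ _)
      exact rpow_sum_le_sum _ _ hterm s hs hs1
  have e : ∑ c : ∀ k, I k → X, wt p c * (Qh W c z * Qh W c z ^ s) =
      (∏ k, (Fintype.card (I k) : ℝ))⁻¹ * ∑ i : ∀ k, I k, ∑ c : ∀ k, I k → X,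
        wt p c * (W (fun k => c k (i k)) z * Qh W c z ^ s) := by
    rw [Finset.sum_comm, Finset.mul_sum]
    refine Finset.sum_congr rfl fun c _ => ?_
    rw [← Finset.mul_sum, ← Finset.sum_mul]
    generalize Qh W c z ^ s = r
    unfold Qh
    ring
  rw [e]
  have hN : (0 : ℝ) < ∏ k, (Fintype.card (I k) : ℝ) := Finset.prod_pos fun k _ => hcard k
  rw [inv_mul_le_iff₀ hN]
  refine (Finset.sum_le_sum fun i _ => key i).trans ?_
  rw [Finset.sum_const, Finset.card_univ, nsmul_eq_mul, Fintype.card_pi]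
  simp

end oneshot

lemma kl_le_rpow {O : Type} [Fintype O] (P Q : O → ℝ) (hP : ∀ z, 0 ≤ P z) (hP1 : ∑ z, P z = 1)
    (hQ : ∀ z, 0 ≤ Q z) (hAC : ∀ z, Q z = 0 → P z = 0) (s : ℝ) (hs : 0 < s) :
    klDiv P Q ≤ s⁻¹ * (∑ z, P z * P z ^ s * (Q z ^ s)⁻¹ - 1) := by
  unfold klDiv
  rw [← hP1, ← Finset.sum_sub_distrib, Finset.mul_sum]
  refine Finset.sum_le_sum fun z _ => ?_
  rcases (hP z).eq_or_lt with h | h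
  · simp [← h]
  · have hq : 0 < Q z := lt_of_le_of_ne (hQ z) (fun h0 => h.ne' (hAC z h0.symm))
    have h1 := Real.log_le_sub_one_of_pos (Real.rpow_pos_of_pos (div_pos h hq) s)
    rw [Real.log_rpow (div_pos h hq), Real.div_rpow h.le hq.le] at h1
    have h2 : Real.log (P z / Q z) ≤ s⁻¹ * (P z ^ s / Q z ^ s - 1) := by
      rw [le_inv_mul_iff₀ hs]; exact h1
    calc P z * Real.log (P z / Q z) ≤ P z * (s⁻¹ * (P z ^ s / Q z ^ s - 1)) :=
          mul_le_mul_of_nonneg_left h2 h.le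
      _ = _ := by rw [div_eq_mul_inv]; ring

lemma hell_le_kl {O : Type} [Fintype O] (P Q : O → ℝ) (hP : ∀ z, 0 ≤ P z) (hP1 : ∑ z, P z = 1)
    (hQ : ∀ z, 0 ≤ Q z) (hQ1 : ∑ z, Q z = 1) (hAC : ∀ z, Q z = 0 → P z = 0) :
    ∑ z, (Real.sqrt (P z) - Real.sqrt (Q z)) ^ 2 ≤ klDiv P Q := by
  have e : klDiv P Q = ∑ z, (P z * Real.log (P z / Q z) - P z + Q z) := by
    rw [Finset.sum_add_distrib, Finset.sum_sub_distrib, hP1, hQ1]; unfold klDiv; ring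
  rw [e]
  refine Finset.sum_le_sum fun z _ => ?_
  rcases (hP z).eq_or_lt with h | h
  · simp [← h, Real.sq_sqrt (hQ z)]
  · have hq : 0 < Q z := lt_of_le_of_ne (hQ z) (fun h0 => h.ne' (hAC z h0.symm))
    set a := Real.sqrt (P z) with ha
    set b := Real.sqrt (Q z) with hb
    have ha0 : 0 < a := Real.sqrt_pos.2 h
    have hb0 : 0 < b := Real.sqrt_pos.2 hq
    have hPa : P z = a ^ 2 := (Real.sq_sqrt h.le).symm
    have hQb : Q z = b ^ 2 := (Real.sq_sqrt hq.le).symm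
    rw [hPa, hQb]
    have h1 := Real.log_le_sub_one_of_pos (div_pos hb0 ha0)
    have h2 : Real.log (a ^ 2 / b ^ 2) = -2 * Real.log (b / a) := by
      rw [← div_pow, Real.log_pow, Real.log_div ha0.ne' hb0.ne', Real.log_div hb0.ne' ha0.ne']
      push_cast; ring
    rw [h2]
    have h3 : a ^ 2 * (b / a - 1) = a * b - a ^ 2 := by field_simp
    nlinarith [mul_le_mul_of_nonneg_left h1 (sq_nonneg a)]

lemma kl_nonneg' {O : Type} [Fintype O] (P Q : O → ℝ) (hP : ∀ z, 0 ≤ P z) (hP1 : ∑ z, P z = 1)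
    (hQ : ∀ z, 0 ≤ Q z) (hQ1 : ∑ z, Q z = 1) (hAC : ∀ z, Q z = 0 → P z = 0) :
    0 ≤ klDiv P Q :=
  (Finset.sum_nonneg fun _ _ => sq_nonneg _).trans (hell_le_kl P Q hP hP1 hQ hQ1 hAC)

lemma kl_pos' {O : Type} [Fintype O] (P Q : O → ℝ) (hP : ∀ z, 0 ≤ P z) (hP1 : ∑ z, P z = 1)
    (hQ : ∀ z, 0 ≤ Q z) (hQ1 : ∑ z, Q z = 1) (hAC : ∀ z, Q z = 0 → P z = 0) (hne : P ≠ Q) :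
    0 < klDiv P Q := by
  refine lt_of_lt_of_le ?_ (hell_le_kl P Q hP hP1 hQ hQ1 hAC)
  obtain ⟨z, hz⟩ := Function.ne_iff.1 hne
  refine Finset.sum_pos' (fun _ _ => sq_nonneg _) ⟨z, Finset.mem_univ _, ?_⟩
  refine lt_of_le_of_ne (sq_nonneg _) (Ne.symm ?_)
  refine pow_ne_zero 2 (sub_ne_zero.2 ?_)
  intro h
  exact hz ((Real.sqrt_inj (hP z) (hQ z)).1 h)

lemma tv_bound {O : Type} [Fintype O] (P Q : O → ℝ) (hP : ∀ z, 0 ≤ P z) (hP1 : ∑ z, P z = 1)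
    (hQ : ∀ z, 0 ≤ Q z) (hQ1 : ∑ z, Q z = 1) (hAC : ∀ z, Q z = 0 → P z = 0)
    (f : O → ℝ) (B : ℝ) (hB : 0 ≤ B) (hf : ∀ z, Q z ≠ 0 → |f z| ≤ B) :
    |∑ z, P z * f z - ∑ z, Q z * f z| ≤ B * (2 * Real.sqrt (klDiv P Q)) := by
  rw [← Finset.sum_sub_distrib]
  refine (Finset.abs_sum_le_sum_abs _ _).trans ?_
  have h1 : ∀ z, |P z * f z - Q z * f z| ≤
      B * (|Real.sqrt (P z) - Real.sqrt (Q z)| * (Real.sqrt (P z) + Real.sqrt (Q z))) := by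
    intro z
    by_cases h : Q z = 0
    · simp [h, hAC z h]
    · have e : P z * f z - Q z * f z = ((Real.sqrt (P z) - Real.sqrt (Q z)) *
        (Real.sqrt (P z) + Real.sqrt (Q z))) * f z := by
        have e1 := Real.sq_sqrt (hP z)
        have e2 := Real.sq_sqrt (hQ z)
        have : (Real.sqrt (P z) - Real.sqrt (Q z)) * (Real.sqrt (P z) + Real.sqrt (Q z)) = P z - Q z := by
          nlinarith
        rw [this]; ring
      rw [e, abs_mul, abs_mul, abs_of_nonneg (add_nonneg (Real.sqrt_nonneg (P z)) (Real.sqrt_nonneg (Q z))),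
        mul_comm B]
      exact mul_le_mul_of_nonneg_left (hf z h) (mul_nonneg (abs_nonneg _)
        (add_nonneg (Real.sqrt_nonneg (P z)) (Real.sqrt_nonneg (Q z))))
  refine (Finset.sum_le_sum fun z _ => h1 z).trans ?_
  rw [← Finset.mul_sum]
  refine mul_le_mul_of_nonneg_left ?_ hB
  have cs := Finset.sum_mul_sq_le_sq_mul_sq Finset.univ
    (fun z => |Real.sqrt (P z) - Real.sqrt (Q z)|) (fun z => Real.sqrt (P z) + Real.sqrt (Q z))
  have h2 : ∑ z, (Real.sqrt (P z) + Real.sqrt (Q z)) ^ 2 ≤ 4 := by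
    have : ∑ z, (Real.sqrt (P z) + Real.sqrt (Q z)) ^ 2 ≤ ∑ z, (2 * P z + 2 * Q z) := by
      refine Finset.sum_le_sum fun z _ => ?_
      nlinarith [Real.sq_sqrt (hP z), Real.sq_sqrt (hQ z), sq_nonneg (Real.sqrt (P z) - Real.sqrt (Q z))]
    rw [Finset.sum_add_distrib, ← Finset.mul_sum, ← Finset.mul_sum, hP1, hQ1] at this
    linarith
  have h3 := hell_le_kl P Q hP hP1 hQ hQ1 hAC
  simp only [sq_abs] at cs
  have h4 : 0 ≤ ∑ z, (Real.sqrt (P z) - Real.sqrt (Q z)) ^ 2 := Finset.sum_nonneg fun _ _ => sq_nonneg _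
  refine le_of_abs_le (abs_le_of_sq_le_sq ?_ ?_)
  · rw [mul_pow, Real.sq_sqrt (h4.trans h3)]
    nlinarith
  · positivity

section oneshot
variable {K : ℕ}  {X : Type} [Fintype X]

/-- Output law under independent inputs. -/
def Qav {O : Type} (p : Fin K → X → ℝ) (W : (Fin K → X) → O → ℝ) (z : O) : ℝ :=
  ∑ x, (∏ k, p k (x k)) * W x z

lemma WT_empty {O : Type} (p : Fin K → X → ℝ) (W : (Fin K → X) → O → ℝ) (x : Fin K → X) (z : O) :
    WT p W ∅ x z = Qav p W z := by
  simp [WT, Qav, kap]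

lemma prod_p_sum (p : Fin K → X → ℝ) (hp : ∀ k, ∑ x, p k x = 1) :
    ∑ x : Fin K → X, ∏ k, p k (x k) = 1 := by
  rw [← Fintype.prod_sum]; simp [hp]

lemma Qav_sum {O : Type} [Fintype O] (p : Fin K → X → ℝ) (hp : ∀ k, ∑ x, p k x = 1)
    (W : (Fin K → X) → O → ℝ) (hW1 : ∀ x, ∑ z, W x z = 1) : ∑ z, Qav p W z = 1 := by
  unfold Qav
  rw [Finset.sum_comm]
  simp_rw [← Finset.mul_sum, hW1, mul_one]
  exact prod_p_sum p hp

lemma Qav_nonneg {O : Type} (p : Fin K → X → ℝ) (hp0 : ∀ k x, 0 ≤ p k x)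
    (W : (Fin K → X) → O → ℝ) (hW : ∀ x z, 0 ≤ W x z) (z : O) : 0 ≤ Qav p W z :=
  Finset.sum_nonneg fun x _ => mul_nonneg (Finset.prod_nonneg fun k _ => hp0 _ _) (hW _ _)

variable {I : Fin K → Type} [∀ k, Fintype (I k)] [∀ k, DecidableEq (I k)]

lemma Qh_sum {O : Type} [Fintype O] [∀ k, Nonempty (I k)] (W : (Fin K → X) → O → ℝ)
    (hW1 : ∀ x, ∑ z, W x z = 1) (c : ∀ k, I k → X) : ∑ z, Qh W c z = 1 := by
  unfold Qh
  rw [← Finset.mul_sum, Finset.sum_comm]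
  simp only [hW1, Finset.sum_const, Finset.card_univ, nsmul_eq_mul, mul_one, Fintype.card_pi]
  push_cast
  refine inv_mul_cancel₀ (Finset.prod_ne_zero_iff.2 fun k _ => ?_)
  exact_mod_cast Fintype.card_ne_zero

lemma Qh_ac {O : Type} (W : (Fin K → X) → O → ℝ) (c : ∀ k, I k → X) (z : O)
    (h : ∀ x, W x z = 0) : Qh W c z = 0 := by
  simp [Qh, h]

lemma resolv {O : Type} [Fintype O] [∀ k, Nonempty (I k)] (p : Fin K → X → ℝ)
    (hp : ∀ k, ∑ x, p k x = 1) (hp0 : ∀ k x, 0 ≤ p k x)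
    (W : (Fin K → X) → O → ℝ) (hW : ∀ x z, 0 ≤ W x z) (hW1 : ∀ x, ∑ z, W x z = 1)
    (hAC : ∀ z, Qav p W z = 0 → ∀ x, W x z = 0)
    (ν : Fin K → ℝ) (hν0 : ∀ k, 0 ≤ ν k)
    (hν : ∀ k, ν k = (Fintype.card (I k) : ℝ)⁻¹ ∨
      (ν k = 0 ∧ ∀ x x', p k x * kd x' x = p k x * p k x'))
    (s : ℝ) (hs : 0 < s) (hs1 : s ≤ 1) :
    ∑ c : ∀ k, I k → X, wt p c * klDiv (Qh W c) (Qav p W) ≤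
      s⁻¹ * ∑ T ∈ Finset.univ.erase (∅ : Finset (Fin K)), (∏ k ∈ T, ν k) ^ s *
        ∑ x, (∏ k, p k (x k)) * ∑ z, W x z * (WT p W T x z / Qav p W z) ^ s := by
  have hQ0 := Qav_nonneg p hp0 W hW
  have h1 : ∑ c : ∀ k, I k → X, wt p c * klDiv (Qh W c) (Qav p W) ≤
      ∑ c : ∀ k, I k → X, wt p c * (s⁻¹ * (∑ z, Qh W c z * Qh W c z ^ s * (Qav p W z ^ s)⁻¹ - 1)) := by
    refine Finset.sum_le_sum fun c _ => mul_le_mul_of_nonneg_left ?_ (wt_nonneg p hp0 c)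
    exact kl_le_rpow _ _ (Qh_nonneg W hW c) (Qh_sum W hW1 c) hQ0
      (fun z hz => Qh_ac W c z (hAC z hz)) s hs
  refine h1.trans ?_
  have h2 : ∑ c : ∀ k, I k → X, wt p c * (s⁻¹ * (∑ z, Qh W c z * Qh W c z ^ s * (Qav p W z ^ s)⁻¹ - 1)) =
      s⁻¹ * ((∑ z, (∑ c : ∀ k, I k → X, wt p c * (Qh W c z * Qh W c z ^ s)) * (Qav p W z ^ s)⁻¹) - 1) := by
    simp_rw [mul_left_comm _ s⁻¹, ← Finset.mul_sum, mul_sub, Finset.sum_sub_distrib, mul_one, wt_sum p hp]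
    simp_rw [Finset.mul_sum, Finset.sum_mul]
    rw [Finset.sum_comm]
    simp_rw [mul_assoc]
    rw [mul_sub, mul_one, Finset.mul_sum]
  rw [h2]
  refine mul_le_mul_of_nonneg_left ?_ (inv_nonneg.2 hs.le)
  have h3 : ∑ z, (∑ c : ∀ k, I k → X, wt p c * (Qh W c z * Qh W c z ^ s)) * (Qav p W z ^ s)⁻¹ ≤
      ∑ z, (∑ x, (∏ k, p k (x k)) * (W x z * ∑ T : Finset (Fin K),
        ((∏ k ∈ T, ν k) * WT p W T x z) ^ s)) * (Qav p W z ^ s)⁻¹ :=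
    Finset.sum_le_sum fun z _ => mul_le_mul_of_nonneg_right
      (exp_Qh_rpow p hp hp0 W hW ν hν0 hν s hs hs1 z) (inv_nonneg.2 (Real.rpow_nonneg (hQ0 z) s))
  have h4 : ∑ z, (∑ x, (∏ k, p k (x k)) * (W x z * ∑ T : Finset (Fin K),
        ((∏ k ∈ T, ν k) * WT p W T x z) ^ s)) * (Qav p W z ^ s)⁻¹ =
      ∑ T : Finset (Fin K), (∏ k ∈ T, ν k) ^ s *
        ∑ x, (∏ k, p k (x k)) * ∑ z, W x z * (WT p W T x z / Qav p W z) ^ s := by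
    simp_rw [Finset.mul_sum, Finset.sum_mul]
    rw [Finset.sum_comm, Finset.sum_congr rfl (fun x _ => Finset.sum_comm), Finset.sum_comm]
    refine Finset.sum_congr rfl fun T _ => Finset.sum_congr rfl fun x _ =>
      Finset.sum_congr rfl fun z _ => ?_
    have hw := WT_nonneg p hp0 W hW T x z
    rw [Real.mul_rpow (Finset.prod_nonneg fun k _ => hν0 k) hw, Real.div_rpow hw (hQ0 z)]
    ring
  have h5 : ∑ T : Finset (Fin K), (∏ k ∈ T, ν k) ^ s *
        ∑ x, (∏ k, p k (x k)) * ∑ z, W x z * (WT p W T x z / Qav p W z) ^ s ≤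
      1 + ∑ T ∈ Finset.univ.erase (∅ : Finset (Fin K)), (∏ k ∈ T, ν k) ^ s *
        ∑ x, (∏ k, p k (x k)) * ∑ z, W x z * (WT p W T x z / Qav p W z) ^ s := by
    rw [← Finset.add_sum_erase _ _ (Finset.mem_univ (∅ : Finset (Fin K)))]
    refine add_le_add_left ?_ _
    simp only [Finset.prod_empty, Real.one_rpow, one_mul, WT_empty]
    calc ∑ x : Fin K → X, (∏ k, p k (x k)) * ∑ z, W x z * (Qav p W z / Qav p W z) ^ s
        ≤ ∑ x : Fin K → X, (∏ k, p k (x k)) * 1 := by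
          refine Finset.sum_le_sum fun x _ => mul_le_mul_of_nonneg_left ?_
            (Finset.prod_nonneg fun k _ => hp0 _ _)
          rw [← hW1 x]
          refine Finset.sum_le_sum fun z _ => ?_
          by_cases h : Qav p W z = 0
          · simp [hAC z h x]
          · simp [div_self h]
      _ = 1 := by simp_rw [mul_one]; exact prod_p_sum p hp
  linarith [h3.trans (h4.le.trans h5)]

end oneshot

section reliab
variable {K : ℕ}  {X : Type} [Fintype X] {O : Type} [Fintype O]

/-- Average error probability of a code for a one-shot channel. -/
def PeG (W : (Fin K → X) → O → ℝ) (M L : Fin K → ℕ) (c : ∀ k, Fin (M k) × Fin (L k) → X)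
    (dec : O → (∀ k, Fin (L k)) → ∀ k, Fin (M k)) : ℝ :=
  (∏ k, ((M k : ℝ) * (L k : ℝ)))⁻¹ *
    ∑ m : ∀ k, Fin (M k), ∑ l : ∀ k, Fin (L k), ∑ y : O,
      W (fun k => c k (m k, l k)) y * (if dec y l = m then 0 else 1)

lemma dec_exists (W : (Fin K → X) → O → ℝ) (M L : Fin K → ℕ) (hM : ∀ k, 0 < M k)
    (B : Finset (Fin K)) (hB : ∀ k, k ∉ B → M k = 1)
    (r : Fin K → X → O → ℝ) (hr0 : ∀ k x y, 0 ≤ r k x y)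
    (hr : ∀ x y, W x y ≠ 0 → ∀ k, 0 < r k (x k) y) (θ : Fin K → ℝ) (hθ : ∀ k, 0 < θ k)
    (s : Fin K → ℝ) (hs : ∀ k, 0 < s k) (c : ∀ k, Fin (M k) × Fin (L k) → X) :
    ∃ dec : O → (∀ k, Fin (L k)) → ∀ k, Fin (M k), ∀ y l m, W (fun k => c k (m k, l k)) y ≠ 0 →
      (if dec y l = m then (0 : ℝ) else 1) ≤ ∑ k ∈ B, ((θ k / r k (c k (m k, l k)) y) ^ (s k) +
        ∑ m' : Fin (M k), if m' = m k then 0 else r k (c k (m', l k)) y / θ k) := by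
  refine ⟨fun y l k => if h : ∃ m, θ k < r k (c k (m, l k)) y then h.choose else ⟨0, hM k⟩, ?_⟩
  intro y l m hW
  have hpos := hr _ y hW
  have hn2 : ∀ k, ∀ m' : Fin (M k), (0 : ℝ) ≤ if m' = m k then 0 else r k (c k (m', l k)) y / θ k := by
    intro k m'
    split_ifs
    · exact le_rfl
    · exact div_nonneg (hr0 _ _ _) (hθ k).le
  have hn1 : ∀ k, 0 ≤ (θ k / r k (c k (m k, l k)) y) ^ (s k) := fun k =>
    Real.rpow_nonneg (div_nonneg (hθ k).le (hpos k).le) _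
  have hn : ∀ k, 0 ≤ (θ k / r k (c k (m k, l k)) y) ^ (s k) +
        ∑ m' : Fin (M k), (if m' = m k then 0 else r k (c k (m', l k)) y / θ k) := fun k =>
    add_nonneg (hn1 k) (Finset.sum_nonneg fun m' _ => hn2 k m')
  split_ifs with hd
  · exact Finset.sum_nonneg fun k _ => hn k
  · obtain ⟨k, hk⟩ := Function.ne_iff.1 hd
    have hkB : k ∈ B := by
      by_contra hcon
      have h1 := hB k hcon
      apply hk
      have : Subsingleton (Fin (M k)) := by rw [h1]; infer_instance
      exact Subsingleton.elim _ _
    refine le_trans ?_ (Finset.single_le_sum (fun k _ => hn k) hkB)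
    by_cases ht : θ k < r k (c k (m k, l k)) y
    · have hex : ∃ m, θ k < r k (c k (m, l k)) y := ⟨m k, ht⟩
      simp only [dif_pos hex] at hk
      have h5 := Finset.single_le_sum (fun m' _ => hn2 k m') (Finset.mem_univ hex.choose)
      rw [if_neg hk] at h5
      have h6 : 1 ≤ r k (c k (hex.choose, l k)) y / θ k := by
        rw [le_div_iff₀ (hθ k), one_mul]; exact hex.choose_spec.le
      linarith [hn1 k]
    · have h6 : 1 ≤ θ k / r k (c k (m k, l k)) y := by
        rw [le_div_iff₀ (hpos k), one_mul]; exact not_lt.1 ht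
      have h7 := Real.one_le_rpow h6 (hs k).le
      have := Finset.sum_nonneg fun m' (_ : m' ∈ Finset.univ) => hn2 k m'
      linarith

lemma false_exp (p : Fin K → X → ℝ) (hp : ∀ k, ∑ x, p k x = 1)
    (M L : Fin K → ℕ) (i : ∀ k, Fin (M k) × Fin (L k)) (k : Fin K) (b : Fin (M k) × Fin (L k))
    (hb : i k ≠ b) (g : (Fin K → X) → X → ℝ) :
    ∑ c : ∀ k, Fin (M k) × Fin (L k) → X, wt p c * g (fun k => c k (i k)) (c k b) =
      ∑ x, (∏ k, p k (x k)) * ∑ v, p k v * g x v := by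
  have h := pair_exp p hp i (Function.update i k b) (fun x x' => g x (x' k))
  simp only [Function.update_self] at h
  rw [h]
  refine Finset.sum_congr rfl fun x _ => ?_
  have e : ∀ x' : Fin K → X, (∏ l, (p l (x l) * tau (p l) (i l) (Function.update i k b l) (x l) (x' l))) * g x (x' k)
      = (∏ l, p l (x l)) * ∏ l, (if l = k then p l (x' l) * g x (x' l) else kd (x' l) (x l)) := by
    intro x'
    rw [Finset.prod_mul_distrib, mul_assoc]
    congr 1
    rw [← Fintype.prod_ite_eq' k (fun l => g x (x' l)), ← Finset.prod_mul_distrib]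
    refine Finset.prod_congr rfl fun l _ => ?_
    by_cases hl : l = k
    · subst hl; simp [tau, hb]
    · simp [tau, hl]
  simp_rw [e, ← Finset.mul_sum]
  congr 1
  rw [← Fintype.prod_sum (fun l v => if l = k then p l v * g x v else kd v (x l))]
  rw [Finset.prod_eq_single k]
  · simp
  · intro l _ hl
    simp [hl, kd]
  · simp

lemma reliab (p : Fin K → X → ℝ) (hp : ∀ k, ∑ x, p k x = 1) (hp0 : ∀ k x, 0 ≤ p k x)
    (W : (Fin K → X) → O → ℝ) (hW : ∀ x z, 0 ≤ W x z)
    (M L : Fin K → ℕ) (hM : ∀ k, 0 < M k) (hL : ∀ k, 0 < L k)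
    (B : Finset (Fin K)) (hB : ∀ k, k ∉ B → M k = 1)
    (r : Fin K → X → O → ℝ) (hr0 : ∀ k x y, 0 ≤ r k x y)
    (hr : ∀ x y, W x y ≠ 0 → ∀ k, 0 < r k (x k) y) (θ : Fin K → ℝ) (hθ : ∀ k, 0 < θ k)
    (s : Fin K → ℝ) (hs : ∀ k, 0 < s k) :
    ∃ dec : (∀ k, Fin (M k) × Fin (L k) → X) → O → (∀ k, Fin (L k)) → ∀ k, Fin (M k),
      ∑ c : ∀ k, Fin (M k) × Fin (L k) → X, wt p c * PeG W M L c (dec c) ≤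
      ∑ k ∈ B, ((∑ x, (∏ k, p k (x k)) * ∑ y, W x y * (θ k / r k (x k) y) ^ (s k)) +
        (M k : ℝ) * ((θ k)⁻¹ * ∑ x, (∏ k, p k (x k)) * ∑ v, p k v * ∑ y, W x y * r k v y)) := by
  choose dec hdec using dec_exists W M L hM B hB r hr0 hr θ hθ s hs
  refine ⟨dec, ?_⟩
  set bd := ∑ k ∈ B, ((∑ x, (∏ k, p k (x k)) * ∑ y, W x y * (θ k / r k (x k) y) ^ (s k)) +
        (M k : ℝ) * ((θ k)⁻¹ * ∑ x, (∏ k, p k (x k)) * ∑ v, p k v * ∑ y, W x y * r k v y)) with hbd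
  have hPx : ∀ x : Fin K → X, 0 ≤ ∏ k, p k (x k) := fun x => Finset.prod_nonneg fun k _ => hp0 _ _
  have key : ∀ (m : ∀ k, Fin (M k)) (l : ∀ k, Fin (L k)),
      ∑ c : ∀ k, Fin (M k) × Fin (L k) → X, wt p c * ∑ y, W (fun k => c k (m k, l k)) y *
        (if dec c y l = m then 0 else 1) ≤ bd := by
    intro m l
    have h1 : ∀ c : ∀ k, Fin (M k) × Fin (L k) → X, ∑ y, W (fun k => c k (m k, l k)) y *
        (if dec c y l = m then 0 else 1) ≤ ∑ y, W (fun k => c k (m k, l k)) y *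
        ∑ k ∈ B, ((θ k / r k (c k (m k, l k)) y) ^ (s k) +
        ∑ m' : Fin (M k), if m' = m k then 0 else r k (c k (m', l k)) y / θ k) := by
      intro c
      refine Finset.sum_le_sum fun y _ => ?_
      by_cases h : W (fun k => c k (m k, l k)) y = 0
      · simp [h]
      · exact mul_le_mul_of_nonneg_left (hdec c y l m h) (hW _ _)
    refine (Finset.sum_le_sum fun c _ => mul_le_mul_of_nonneg_left (h1 c) (wt_nonneg p hp0 c)).trans ?_
    have h2 : ∀ c : ∀ k, Fin (M k) × Fin (L k) → X, wt p c * ∑ y, W (fun k => c k (m k, l k)) y *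
        ∑ k ∈ B, ((θ k / r k (c k (m k, l k)) y) ^ (s k) +
        ∑ m' : Fin (M k), (if m' = m k then 0 else r k (c k (m', l k)) y / θ k)) =
        ∑ k ∈ B, (wt p c * (∑ y, W (fun k => c k (m k, l k)) y * (θ k / r k (c k (m k, l k)) y) ^ (s k)) +
        ∑ m' : Fin (M k), (if m' = m k then 0 else
          (θ k)⁻¹ * (wt p c * ∑ y, W (fun k => c k (m k, l k)) y * r k (c k (m', l k)) y))) := by
      intro c
      simp_rw [Finset.mul_sum]
      rw [Finset.sum_comm]
      refine Finset.sum_congr rfl fun k _ => ?_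
      simp_rw [mul_add, Finset.sum_add_distrib]
      congr 1
      simp_rw [Finset.mul_sum]
      rw [Finset.sum_comm]
      refine Finset.sum_congr rfl fun m' _ => ?_
      split_ifs
      · simp
      · exact Finset.sum_congr rfl fun y _ => by ring
    simp_rw [h2]
    rw [Finset.sum_comm, hbd]
    refine Finset.sum_le_sum fun k _ => ?_
    rw [Finset.sum_add_distrib]
    refine add_le_add ?_ ?_
    · rw [single_exp p hp (fun k => (m k, l k)) (fun x => ∑ y, W x y * (θ k / r k (x k) y) ^ (s k))]
    · rw [Finset.sum_comm]
      have h3 : ∀ m' : Fin (M k), ∑ c : ∀ k, Fin (M k) × Fin (L k) → X, (if m' = m k then 0 else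
          (θ k)⁻¹ * (wt p c * ∑ y, W (fun k => c k (m k, l k)) y * r k (c k (m', l k)) y)) ≤
          (θ k)⁻¹ * ∑ x, (∏ k, p k (x k)) * ∑ v, p k v * ∑ y, W x y * r k v y := by
        intro m'
        split_ifs with h
        · simp only [Finset.sum_const_zero]
          refine mul_nonneg (inv_nonneg.2 (hθ k).le) (Finset.sum_nonneg fun x _ => mul_nonneg (hPx x)
            (Finset.sum_nonneg fun v _ => mul_nonneg (hp0 _ _) (Finset.sum_nonneg fun y _ =>
              mul_nonneg (hW _ _) (hr0 _ _ _))))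
        · rw [← Finset.mul_sum]
          rw [false_exp p hp M L (fun k => (m k, l k)) k (m', l k) (by simpa using Ne.symm h)
            (fun x v => ∑ y, W x y * r k v y)]
      refine (Finset.sum_le_sum fun m' _ => h3 m').trans ?_
      simp
  have e : ∑ c : ∀ k, Fin (M k) × Fin (L k) → X, wt p c * PeG W M L c (dec c) =
      (∏ k, ((M k : ℝ) * (L k : ℝ)))⁻¹ * ∑ m : ∀ k, Fin (M k), ∑ l : ∀ k, Fin (L k),
        ∑ c : ∀ k, Fin (M k) × Fin (L k) → X, wt p c * ∑ y, W (fun k => c k (m k, l k)) y *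
        (if dec c y l = m then 0 else 1) := by
    simp_rw [PeG, mul_left_comm (wt p _), ← Finset.mul_sum]
    congr 1
    have e2 : ∀ (w : ℝ) (f : (∀ k, Fin (M k)) → (∀ k, Fin (L k)) → ℝ),
        w * ∑ m, ∑ l, f m l = ∑ m, ∑ l, w * f m l := by
      intro w f
      simp_rw [Finset.mul_sum]
    simp_rw [e2]
    rw [Finset.sum_comm]
    refine Finset.sum_congr rfl fun m _ => ?_
    rw [Finset.sum_comm]
  rw [e]
  have hN : (0 : ℝ) < ∏ k, ((M k : ℝ) * (L k : ℝ)) := Finset.prod_pos fun k _ =>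
    mul_pos (by exact_mod_cast hM k) (by exact_mod_cast hL k)
  rw [inv_mul_le_iff₀ hN]
  refine (Finset.sum_le_sum fun m _ => Finset.sum_le_sum fun l _ => key m l).trans ?_
  simp only [Finset.sum_const, Finset.card_univ, nsmul_eq_mul, Fintype.card_pi, Fintype.card_fin,
    Finset.prod_mul_distrib]
  push_cast
  rw [mul_assoc]

end reliab

section nfold
variable {K n : ℕ} {O : Type} [Fintype O]

/-- `n`-fold product of an input law. -/
def pN (b : Fin K → Bool → ℝ) (n : ℕ) (k : Fin K) (x : Fin n → Bool) : ℝ := ∏ j, b k (x j)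

/-- `n`-fold channel acting on tuples of codewords. -/
def WN (W : (Fin K → Bool) → O → ℝ) (n : ℕ) (x : Fin K → Fin n → Bool) (z : Fin n → O) : ℝ :=
  prodChannel W n (fun j k => x k j) z

lemma sum_swap (f : (Fin n → Fin K → Bool) → ℝ) :
    ∑ x : Fin K → Fin n → Bool, f (fun j k => x k j) = ∑ u, f u :=
  Equiv.sum_comp (Equiv.piComm (fun (_ : Fin K) (_ : Fin n) => Bool)) f

lemma sum_prod_pow {A : Type*} [Fintype A] (g : A → ℝ) :
    ∑ u : Fin n → A, ∏ j, g (u j) = (∑ a, g a) ^ n := (Fintype.sum_pow g n).symm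

lemma fac2 (g : (Fin K → Bool) → O → ℝ) :
    ∑ x : Fin K → Fin n → Bool, ∑ z : Fin n → O, ∏ j, g (fun k => x k j) (z j) =
      (∑ u, ∑ o, g u o) ^ n := by
  rw [sum_swap (fun u => ∑ z : Fin n → O, ∏ j, g (u j) (z j))]
  rw [← sum_prod_pow (fun u => ∑ o, g u o)]
  refine Finset.sum_congr rfl fun u _ => ?_
  rw [Fintype.prod_sum]

lemma pN_sum (b : Fin K → Bool → ℝ) (hb : ∀ k, ∑ v, b k v = 1) (k : Fin K) :
    ∑ x, pN b n k x = 1 := by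
  unfold pN
  rw [sum_prod_pow, hb, one_pow]

lemma pN_nonneg (b : Fin K → Bool → ℝ) (hb : ∀ k v, 0 ≤ b k v) (k : Fin K) (x : Fin n → Bool) :
    0 ≤ pN b n k x := Finset.prod_nonneg fun _ _ => hb _ _

lemma prod_pN (b : Fin K → Bool → ℝ) (x : Fin K → Fin n → Bool) :
    ∏ k, pN b n k (x k) = ∏ j, ∏ k, b k (x k j) := by
  unfold pN; rw [Finset.prod_comm]

lemma WN_nonneg (W : (Fin K → Bool) → O → ℝ) (hW : ∀ x z, 0 ≤ W x z) (x : Fin K → Fin n → Bool)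
    (z : Fin n → O) : 0 ≤ WN W n x z := by
  unfold WN prodChannel
  exact Finset.prod_nonneg fun _ _ => hW _ _

lemma WN_sum (W : (Fin K → Bool) → O → ℝ) (hW1 : ∀ x, ∑ z, W x z = 1) (x : Fin K → Fin n → Bool) :
    ∑ z, WN W n x z = 1 := by
  unfold WN prodChannel
  rw [← Fintype.prod_sum (fun j o => W (fun k => x k j) o)]
  simp [hW1]

lemma Qav_nfold (b : Fin K → Bool → ℝ) (W : (Fin K → Bool) → O → ℝ) (z : Fin n → O) :
    Qav (pN b n) (WN W n) z = ∏ j, Qav b W (z j) := by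
  unfold Qav
  simp_rw [prod_pN, WN, prodChannel, ← Finset.prod_mul_distrib]
  rw [sum_swap (fun u => ∏ j, ((∏ k, b k (u j k)) * W (u j) (z j)))]
  rw [Fintype.prod_sum]

lemma kap_nfold (b : Fin K → Bool → ℝ) (T : Finset (Fin K)) (x x' : Fin K → Fin n → Bool) :
    kap (pN b n) T x x' = ∏ j, kap b T (fun k => x k j) (fun k => x' k j) := by
  unfold kap
  rw [Finset.prod_comm]
  refine Finset.prod_congr rfl fun k _ => ?_
  split_ifs
  · rw [kd_pi]
  · rfl

lemma WT_nfold (b : Fin K → Bool → ℝ) (W : (Fin K → Bool) → O → ℝ) (T : Finset (Fin K))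
    (x : Fin K → Fin n → Bool) (z : Fin n → O) :
    WT (pN b n) (WN W n) T x z = ∏ j, WT b W T (fun k => x k j) (z j) := by
  unfold WT
  simp_rw [kap_nfold, WN, prodChannel, ← Finset.prod_mul_distrib]
  rw [sum_swap (fun u => ∏ j, (kap b T (fun k => x k j) (u j) * W (u j) (z j)))]
  rw [Fintype.prod_sum]

/-- Single-letter resolvability moment. -/
def GT (b : Fin K → Bool → ℝ) (W : (Fin K → Bool) → O → ℝ) (T : Finset (Fin K)) (s : ℝ) : ℝ :=
  ∑ u, (∏ k, b k (u k)) * ∑ o, W u o * (WT b W T u o / Qav b W o) ^ s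

lemma GT_nfold (b : Fin K → Bool → ℝ) (hb : ∀ k v, 0 ≤ b k v)
    (W : (Fin K → Bool) → O → ℝ) (hW : ∀ x z, 0 ≤ W x z) (T : Finset (Fin K)) (s : ℝ) :
    ∑ x, (∏ k, pN b n k (x k)) * ∑ z, WN W n x z *
      (WT (pN b n) (WN W n) T x z / Qav (pN b n) (WN W n) z) ^ s = GT b W T s ^ n := by
  unfold GT
  simp_rw [Finset.mul_sum]
  rw [← fac2]
  refine Finset.sum_congr rfl fun x _ => Finset.sum_congr rfl fun z _ => ?_
  rw [prod_pN, WT_nfold, Qav_nfold, WN, prodChannel, ← Finset.prod_div_distrib,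
    ← Real.finsetProd_rpow, ← Finset.prod_mul_distrib, ← Finset.prod_mul_distrib]
  intro j _
  exact div_nonneg (WT_nonneg b hb W hW T _ _) (Qav_nonneg b hb W hW _)

/-- Single-letter missed-detection moment. -/
def HM (b : Fin K → Bool → ℝ) (W : (Fin K → Bool) → O → ℝ) (r : Bool → O → ℝ) (k : Fin K)
    (s : ℝ) : ℝ :=
  ∑ u, (∏ k, b k (u k)) * ∑ o, W u o * ((r (u k) o)⁻¹) ^ s

lemma HM_nfold (b : Fin K → Bool → ℝ) (W : (Fin K → Bool) → O → ℝ)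
    (r : Bool → O → ℝ) (hr : ∀ v o, 0 ≤ r v o) (k : Fin K) (s θ : ℝ) (hθ : 0 ≤ θ) :
    ∑ x, (∏ k, pN b n k (x k)) * ∑ z, WN W n x z * (θ / ∏ j, r (x k j) (z j)) ^ s =
      θ ^ s * HM b W r k s ^ n := by
  unfold HM
  simp_rw [Finset.mul_sum]
  rw [← fac2, Finset.mul_sum]
  refine Finset.sum_congr rfl fun x _ => ?_
  rw [Finset.mul_sum]
  refine Finset.sum_congr rfl fun z _ => ?_
  rw [prod_pN, WN, prodChannel, div_eq_mul_inv, ← Finset.prod_inv_distrib, Real.mul_rpow hθ,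
    ← Real.finsetProd_rpow, Finset.prod_mul_distrib, Finset.prod_mul_distrib]
  · ring
  · intro j _
    exact inv_nonneg.2 (hr _ _)
  · exact Finset.prod_nonneg fun j _ => inv_nonneg.2 (hr _ _)

/-- Single-letter false-alarm moment. -/
def FA (b : Fin K → Bool → ℝ) (W : (Fin K → Bool) → O → ℝ) (r : Bool → O → ℝ) (k : Fin K) : ℝ :=
  ∑ u, (∏ k, b k (u k)) * ∑ o, W u o * ∑ v, b k v * r v o

lemma FA_nfold (b : Fin K → Bool → ℝ) (W : (Fin K → Bool) → O → ℝ)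
    (r : Bool → O → ℝ) (k : Fin K) :
    ∑ x, (∏ k, pN b n k (x k)) * ∑ v, pN b n k v * ∑ z, WN W n x z * (∏ j, r (v j) (z j)) =
      FA b W r k ^ n := by
  unfold FA
  simp_rw [Finset.mul_sum]
  rw [← fac2]
  refine Finset.sum_congr rfl fun x _ => ?_
  rw [Finset.sum_comm]
  refine Finset.sum_congr rfl fun z _ => ?_
  rw [Fintype.prod_sum]
  refine Finset.sum_congr rfl fun v _ => ?_
  rw [prod_pN, WN, prodChannel, pN, ← Finset.prod_mul_distrib, ← Finset.prod_mul_distrib,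
    ← Finset.prod_mul_distrib]
  exact Finset.prod_congr rfl fun j _ => by ring

lemma Qh_eq (W : (Fin K → Bool) → O → ℝ) (M L : Fin K → ℕ)
    (enc : ∀ k, Fin (M k) × Fin (L k) → Fin n → Bool) :
    Qhat W M L enc = Qh (WN W n) enc := by
  funext z
  unfold Qhat Qh
  congr 1
  · simp
  · rw [← Finset.sum_product']
    refine Finset.sum_bij' (fun ml _ k => (ml.1 k, ml.2 k)) (fun i _ => (fun k => (i k).1, fun k => (i k).2))
      ?_ ?_ ?_ ?_ ?_ <;> simp [WN]

lemma Pe_eq (W : (Fin K → Bool) → O → ℝ) (M L : Fin K → ℕ)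
    (enc : ∀ k, Fin (M k) × Fin (L k) → Fin n → Bool)
    (dec : (Fin n → O) → (∀ k, Fin (L k)) → ∀ k, Fin (M k)) :
    Pe W M L enc dec = PeG (WN W n) M L enc dec := rfl

/-- Sum of single-letter functions under a product law. -/
lemma sum_marg (q g : O → ℝ) (hq : ∑ o, q o = 1) :
    ∑ z : Fin n → O, (∏ j, q (z j)) * ∑ i, g (z i) = n * ∑ o, q o * g o := by
  simp_rw [Finset.mul_sum]
  rw [Finset.sum_comm]
  have : ∀ i : Fin n, ∑ z : Fin n → O, (∏ j, q (z j)) * g (z i) = ∑ o, q o * g o := by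
    intro i
    have e : ∀ z : Fin n → O, (∏ j, q (z j)) * g (z i) =
        ∏ j, (q (z j) * if j = i then g (z j) else 1) := by
      intro z
      rw [Finset.prod_mul_distrib, Fintype.prod_ite_eq']
    simp_rw [e]
    rw [← Fintype.prod_sum (fun j o => q o * if j = i then g o else 1)]
    rw [Finset.prod_eq_single i]
    · simp
    · intro j _ hj; simp [hj, hq]
    · simp
  simp_rw [this, ← Finset.mul_sum]
  simp

end nfold

section calc1
variable {K : ℕ} {O : Type} [Fintype O]

lemma hasDerivAt_bern (a : ℝ) (v : Bool) :
    HasDerivAt (fun t : ℝ => bern (t * a) v) (if v then a else -a) 0 := by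
  have h := (hasDerivAt_id (0 : ℝ)).mul_const a
  cases v
  · simpa [bern] using h.const_sub 1
  · simpa [bern] using h

/-- Derivative at `0` of the weight of an input letter. -/
def dP (ρ : Fin K → ℝ) (x : Fin K → Bool) : ℝ :=
  ∑ k, (∏ l ∈ univ.erase k, bern 0 (x l)) * (if x k then ρ k else -ρ k)

lemma hasDerivAt_P (ρ : Fin K → ℝ) (x : Fin K → Bool) :
    HasDerivAt (fun t : ℝ => ∏ k, bern (t * ρ k) (x k)) (dP ρ x) 0 := by
  have h := HasDerivAt.fun_finsetProd (u := univ) (x := (0 : ℝ))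
    (f := fun k t => bern (t * ρ k) (x k)) (f' := fun k => if x k then ρ k else -ρ k)
    (fun k _ => hasDerivAt_bern (ρ k) (x k))
  simpa [dP] using h

lemma bern_zero (v : Bool) : bern 0 v = kd v false := by
  cases v <;> simp [bern, kd]

lemma xU_empty : (xU (∅ : Finset (Fin K))) = fun _ => false := by
  funext k; simp [xU]

lemma xU_single (k : Fin K) : (xU ({k} : Finset (Fin K))) = fun l => decide (l = k) := by
  funext l; simp [xU]

lemma P_zero (x : Fin K → Bool) : ∏ k, bern 0 (x k) = kd x (xU ∅) := by
  simp_rw [bern_zero]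
  rw [xU_empty, ← kd_pi]

lemma sum_dP (ρ : Fin K → ℝ) (g : (Fin K → Bool) → ℝ) :
    ∑ x, dP ρ x * g x = ∑ k, ρ k * (g (xU {k}) - g (xU ∅)) := by
  unfold dP
  simp_rw [Finset.sum_mul]
  rw [Finset.sum_comm]
  refine Finset.sum_congr rfl fun k _ => ?_
  have hne : xU ({k} : Finset (Fin K)) ≠ xU ∅ := by
    intro h
    have := congrFun h k
    simp [xU] at this
  rw [← Finset.sum_subset (Finset.subset_univ {xU ({k} : Finset (Fin K)), xU ∅})]
  · rw [Finset.sum_pair hne]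
    have h1 : ∏ l ∈ univ.erase k, bern 0 (xU ({k} : Finset (Fin K)) l) = 1 := by
      refine Finset.prod_eq_one fun l hl => ?_
      simp [xU, bern, Finset.ne_of_mem_erase hl]
    have h2 : ∏ l ∈ univ.erase k, bern 0 (xU (∅ : Finset (Fin K)) l) = 1 := by
      refine Finset.prod_eq_one fun l hl => ?_
      simp [xU, bern]
    rw [h1, h2]
    simp [xU]
    ring
  · intro x _ hx
    simp only [Finset.mem_insert, Finset.mem_singleton, not_or] at hx
    have : ∃ l ∈ univ.erase k, x l = true := by
      by_contra hcon
      push Not at hcon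
      cases hk : x k
      · apply hx.2
        funext l
        by_cases hl : l = k
        · subst hl; simp [hk, xU]
        · have := hcon l (Finset.mem_erase.2 ⟨hl, Finset.mem_univ _⟩)
          simp [xU] at this ⊢; exact this
      · apply hx.1
        funext l
        by_cases hl : l = k
        · subst hl; simp [hk, xU]
        · have := hcon l (Finset.mem_erase.2 ⟨hl, Finset.mem_univ _⟩)
          simp [xU, hl] at this ⊢; exact this
    obtain ⟨l, hl, hxl⟩ := this
    rw [Finset.prod_eq_zero hl (by simp [bern, hxl])]
    simp

lemma hasDerivAt_mul_cont (p h : ℝ → ℝ) (p' : ℝ) (hp : HasDerivAt p p' 0) (hp0 : p 0 = 0)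
    (hh : ContinuousAt h 0) : HasDerivAt (fun t => p t * h t) (p' * h 0) 0 := by
  rw [hasDerivAt_iff_tendsto_slope_zero] at hp ⊢
  simp only [hp0, zero_add, sub_zero, zero_mul, smul_eq_mul] at hp ⊢
  have := hp.mul (hh.tendsto.mono_left (nhdsWithin_le_nhds (s := {0}ᶜ)))
  exact this.congr fun t => by ring

lemma master (ρ : Fin K → ℝ) (f : ℝ → (Fin K → Bool) → ℝ) (d : ℝ)
    (hc : ∀ x, ContinuousAt (fun t => f t x) 0) (hd : HasDerivAt (fun t => f t (xU ∅)) d 0) :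
    HasDerivAt (fun t => ∑ x, (∏ k, bern (t * ρ k) (x k)) * f t x)
      (d + ∑ k, ρ k * (f 0 (xU {k}) - f 0 (xU ∅))) 0 := by
  have h : ∀ x : Fin K → Bool, HasDerivAt (fun t => (∏ k, bern (t * ρ k) (x k)) * f t x)
      (kd x (xU ∅) * d + dP ρ x * f 0 x) 0 := by
    intro x
    have h0 : (∏ k, bern ((0 : ℝ) * ρ k) (x k)) = kd x (xU ∅) := by
      simp only [zero_mul]; exact P_zero x
    by_cases hx : x = xU ∅
    · subst hx
      have := (hasDerivAt_P ρ (xU ∅)).mul hd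
      rw [h0] at this
      convert! this using 1
      ring
    · have := hasDerivAt_mul_cont _ _ _ (hasDerivAt_P ρ x) (by rw [h0]; simp [kd, hx]) (hc x)
      convert! this using 1
      simp [kd, hx]
  have := HasDerivAt.fun_sum (u := univ) fun x _ => h x
  convert! this using 1
  rw [Finset.sum_add_distrib, sum_dP]
  congr 1
  rw [Finset.sum_eq_single (xU ∅)]
  · simp [kd]
  · intro b _ hb; simp [kd, hb]
  · simp

lemma master_zero (ρ : Fin K → ℝ) (f : ℝ → (Fin K → Bool) → ℝ) :
    ∑ x, (∏ k, bern ((0 : ℝ) * ρ k) (x k)) * f 0 x = f 0 (xU ∅) := by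
  simp only [zero_mul, P_zero]
  rw [Finset.sum_eq_single (xU ∅)]
  · simp [kd]
  · intro b _ hb; simp [kd, hb]
  · simp

lemma expo (G : ℝ → ℝ) (D κ : ℝ) (hG : HasDerivAt G D 0) (h0 : G 0 = 1) (hD : D < κ) :
    ∀ᶠ t in 𝓝[>] (0 : ℝ), G t ≤ Real.exp (κ * t) := by
  rw [hasDerivAt_iff_tendsto_slope_zero] at hG
  have h1 : Tendsto (fun t => t⁻¹ • (G (0 + t) - G 0)) (𝓝[>] (0 : ℝ)) (𝓝 D) :=
    hG.mono_left (nhdsWithin_mono _ (fun t ht => ne_of_gt ht))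
  filter_upwards [h1.eventually_lt_const hD, self_mem_nhdsWithin] with t ht htp
  have htp' : 0 < t := htp
  simp only [zero_add, h0, smul_eq_mul] at ht
  rw [inv_mul_lt_iff₀ htp'] at ht
  have := Real.add_one_le_exp (κ * t)
  linarith

/-- Family of input laws. -/
abbrev bt (ρ : Fin K → ℝ) (t : ℝ) : Fin K → Bool → ℝ := fun k => bern (t * ρ k)

/-- likelihood ratio of user `k`. -/
def rr (W : (Fin K → Bool) → O → ℝ) (k : Fin K) (v : Bool) (o : O) : ℝ :=
  if v then W (xU {k}) o / W (xU ∅) o else 1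

lemma HM_deriv (ρ : Fin K → ℝ) (W : (Fin K → Bool) → O → ℝ) (hW1 : ∀ x, ∑ z, W x z = 1)
    (k : Fin K) (s : ℝ) :
    HasDerivAt (fun t => HM (bt ρ t) W (rr W k) k s)
      (ρ k * (∑ o, W (xU {k}) o * ((W (xU {k}) o / W (xU ∅) o)⁻¹) ^ s - 1)) 0 ∧
    HM (bt ρ 0) W (rr W k) k s = 1 := by
  have e0 : ∑ o, W (xU ∅) o * (rr W k (xU (∅ : Finset (Fin K)) k) o)⁻¹ ^ s = 1 := by
    have h : xU (∅ : Finset (Fin K)) k = false := by simp [xU]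
    simp [h, rr, hW1]
  constructor
  · have h := master ρ (fun _ x => ∑ o, W x o * ((rr W k (x k) o)⁻¹) ^ s) 0
      (fun x => continuousAt_const) (hasDerivAt_const _ _)
    unfold HM
    convert! h using 1
    rw [zero_add, Finset.sum_eq_single k]
    · rw [e0]; simp [rr, xU]
    · intro l _ hl
      rw [e0]
      have : (xU ({l} : Finset (Fin K)) k) = false := by simp [xU, Ne.symm hl]
      simp [this, rr, hW1]
    · simp
  · unfold HM
    rw [master_zero ρ (fun _ x => ∑ o, W x o * ((rr W k (x k) o)⁻¹) ^ s)]
    exact e0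

lemma FA_deriv (ρ : Fin K → ℝ) (W : (Fin K → Bool) → O → ℝ) (hW1 : ∀ x, ∑ z, W x z = 1)
    (k : Fin K) (hAC : ∀ o, W (xU ∅) o = 0 → W (xU {k}) o = 0) :
    HasDerivAt (fun t => FA (bt ρ t) W (rr W k) k) 0 0 ∧ FA (bt ρ 0) W (rr W k) k = 1 := by
  have e0 : ∀ t : ℝ, ∑ o, W (xU ∅) o * ∑ v, bern (t * ρ k) v * rr W k v o = 1 := by
    intro t
    have : ∀ o, W (xU ∅) o * ∑ v, bern (t * ρ k) v * rr W k v o =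
        (1 - t * ρ k) * W (xU ∅) o + t * ρ k * W (xU {k}) o := by
      intro o
      simp only [Fintype.sum_bool, bern, rr]
      by_cases h : W (xU ∅) o = 0
      · simp [h, hAC o h]
      · simp; field_simp; ring
    simp_rw [this]
    rw [Finset.sum_add_distrib, ← Finset.mul_sum, ← Finset.mul_sum, hW1, hW1]; ring
  have e1 : ∀ x, ∑ o, W x o * ∑ v, bern ((0:ℝ) * ρ k) v * rr W k v o = 1 := by
    intro x
    simp [bern, rr, hW1]
  constructor
  · have h := master ρ (fun t x => ∑ o, W x o * ∑ v, bern (t * ρ k) v * rr W k v o) 0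
      (fun x => by
        refine tendsto_finsetSum _ fun o _ => ?_
        refine Tendsto.mul tendsto_const_nhds (tendsto_finsetSum _ fun v _ => ?_)
        exact (hasDerivAt_bern (ρ k) v).continuousAt.tendsto.mul tendsto_const_nhds)
      (by simp_rw [e0]; exact hasDerivAt_const _ _)
    unfold FA
    convert! h using 1
    simp only [e1]; simp
  · unfold FA
    rw [master_zero ρ (fun t x => ∑ o, W x o * ∑ v, bern (t * ρ k) v * rr W k v o)]
    exact e1 _

lemma Qav_deriv (ρ : Fin K → ℝ) (W : (Fin K → Bool) → O → ℝ) (o : O) :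
    HasDerivAt (fun t => Qav (bt ρ t) W o) (∑ k, ρ k * (W (xU {k}) o - W (xU ∅) o)) 0 ∧
    Qav (bt ρ 0) W o = W (xU ∅) o := by
  constructor
  · have h := master ρ (fun _ x => W x o) 0 (fun x => continuousAt_const) (hasDerivAt_const _ _)
    simpa [Qav] using h
  · unfold Qav
    exact master_zero ρ (fun _ x => W x o)

lemma bern_sum (a : ℝ) : ∑ v, bern a v = 1 := by simp [bern]

lemma kap_sum (b : Fin K → Bool → ℝ) (hb : ∀ k, ∑ v, b k v = 1) (T : Finset (Fin K))
    (x : Fin K → Bool) : ∑ x', kap b T x x' = 1 := by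
  unfold kap
  rw [← Fintype.prod_sum (fun k v => if k ∈ T then kd v (x k) else b k v)]
  refine Finset.prod_eq_one fun k _ => ?_
  by_cases h : k ∈ T
  · simp only [h, if_true]
    rw [Finset.sum_eq_single (x k) (fun v _ hv => by simp [kd, hv]) (by simp), kd_self]
  · simp only [h, if_false]; exact hb k

lemma WT_diff (ρ : Fin K → ℝ) (W : (Fin K → Bool) → O → ℝ) (T : Finset (Fin K))
    (x : Fin K → Bool) (o : O) :
    DifferentiableAt ℝ (fun t => WT (bt ρ t) W T x o) 0 := by
  unfold WT kap
  refine DifferentiableAt.fun_sum fun x' _ => ?_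
  refine DifferentiableAt.mul_const ?_ _
  refine DifferentiableAt.fun_finsetProd fun k _ => ?_
  by_cases h : k ∈ T
  · simp [h]
  · simp only [h, if_false]
    exact (hasDerivAt_bern (ρ k) (x' k)).differentiableAt

lemma WT_zero (ρ : Fin K → ℝ) (W : (Fin K → Bool) → O → ℝ) (T : Finset (Fin K))
    (x : Fin K → Bool) (o : O) :
    WT (bt ρ 0) W T x o = W (fun k => if k ∈ T then x k else false) o := by
  unfold WT
  have : ∀ x', kap (bt ρ 0) T x x' = kd x' (fun k => if k ∈ T then x k else false) := by
    intro x'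
    rw [← kd_pi]
    unfold kap
    refine Finset.prod_congr rfl fun k _ => ?_
    split_ifs
    · rfl
    · simp [bt, bern_zero]
  simp_rw [this]
  rw [Finset.sum_eq_single (fun k => if k ∈ T then x k else false)]
  · simp [kd]
  · intro b _ hb; rw [kd, if_neg hb, zero_mul]
  · simp

lemma WT_sum (b : Fin K → Bool → ℝ) (hb : ∀ k, ∑ v, b k v = 1) (W : (Fin K → Bool) → O → ℝ)
    (hW1 : ∀ x, ∑ z, W x z = 1) (T : Finset (Fin K))
    (x : Fin K → Bool) : ∑ o, WT b W T x o = 1 := by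
  unfold WT
  rw [Finset.sum_comm]
  simp_rw [← Finset.mul_sum, hW1, mul_one]
  exact kap_sum b hb T x

lemma GT_deriv (ρ : Fin K → ℝ) (W : (Fin K → Bool) → O → ℝ) (hW1 : ∀ x, ∑ z, W x z = 1)
    (hAC : ∀ o, W (xU ∅) o = 0 → ∀ x, W x o = 0) (T : Finset (Fin K)) (s : ℝ) (hs : 0 < s) :
    HasDerivAt (fun t => GT (bt ρ t) W T s)
      (∑ k ∈ T, ρ k * (∑ o, W (xU {k}) o * (W (xU {k}) o / W (xU ∅) o) ^ s - 1)) 0 ∧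
    GT (bt ρ 0) W T s = 1 := by
  set f : ℝ → (Fin K → Bool) → ℝ := fun t u =>
    ∑ o, W u o * (WT (bt ρ t) W T u o / Qav (bt ρ t) W o) ^ s with hf
  have hcont : ∀ x, ContinuousAt (fun t => f t x) 0 := by
    intro x
    refine tendsto_finsetSum _ fun o _ => ?_
    by_cases h : W (xU ∅) o = 0
    · simp [hAC o h]
    · refine Tendsto.mul tendsto_const_nhds ?_
      have h1 : ContinuousAt (fun t => WT (bt ρ t) W T x o / Qav (bt ρ t) W o) 0 :=
        (WT_diff ρ W T x o).continuousAt.div (Qav_deriv ρ W o).1.continuousAt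
          (by rw [(Qav_deriv ρ W o).2]; exact h)
      exact h1.rpow_const (Or.inr hs.le)
  have hz : (fun k => if k ∈ T then (xU (∅ : Finset (Fin K))) k else false) = xU ∅ := by
    funext k; simp [xU]
  have hnotT : ∀ k, k ∉ T → (fun l => if l ∈ T then (xU ({k} : Finset (Fin K))) l else false) = xU ∅ := by
    intro k hk
    funext l
    by_cases hl : l ∈ T
    · have : l ≠ k := fun h => hk (h ▸ hl)
      simp [xU, this]
    · simp [xU, hl]
  have hinT : ∀ k, k ∈ T → (fun l => if l ∈ T then (xU ({k} : Finset (Fin K))) l else false) = xU {k} := by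
    intro k hk
    funext l
    by_cases hl : l ∈ T
    · simp [hl]
    · have : l ≠ k := fun h => hl (h ▸ hk)
      simp [xU, hl, this]
  have hval1 : ∀ x : Fin K → Bool, (fun k => if k ∈ T then x k else false) = xU ∅ → f 0 x = 1 := by
    intro x hx
    simp only [hf, WT_zero, (Qav_deriv ρ W _).2, hx]
    rw [← hW1 x]
    refine Finset.sum_congr rfl fun o _ => ?_
    by_cases h : W (xU ∅) o = 0
    · simp [hAC o h]
    · simp [div_self h]
  have hd : HasDerivAt (fun t => f t (xU ∅)) 0 0 := by
    have h1 : ∀ o, HasDerivAt (fun t => W (xU ∅) o * (WT (bt ρ t) W T (xU ∅) o / Qav (bt ρ t) W o) ^ s)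
        (s * (deriv (fun t => WT (bt ρ t) W T (xU ∅) o) 0 - ∑ k, ρ k * (W (xU {k}) o - W (xU ∅) o))) 0 := by
      intro o
      by_cases h : W (xU ∅) o = 0
      · have hW0 := hAC o h
        simp only [hW0, zero_mul]
        have : (fun t => WT (bt ρ t) W T (xU ∅) o) = fun _ => 0 := by
          funext t; simp [WT, hW0]
        rw [this]
        simpa using hasDerivAt_const (0 : ℝ) (0 : ℝ)
      · have hq := (Qav_deriv ρ W o)
        have hw := (WT_diff ρ W T (xU ∅) o).hasDerivAt
        have hw0 := WT_zero ρ W T (xU ∅) o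
        rw [hz] at hw0
        have h2 := (hw.div hq.1 (by rw [hq.2]; exact h))
        have h3 := (h2.rpow_const (p := s) (Or.inl (by
          simp only [Pi.div_apply, hq.2, hw0, div_self h]; exact one_ne_zero))).const_mul (W (xU ∅) o)
        convert! h3 using 1
        simp only [Pi.div_apply, hq.2, hw0, div_self h, Real.one_rpow]
        field_simp
    have h2 := HasDerivAt.fun_sum (u := univ) fun o _ => h1 o
    convert! h2 using 1
    rw [← Finset.mul_sum, Finset.sum_sub_distrib]
    have h3 : ∑ o, deriv (fun t => WT (bt ρ t) W T (xU ∅) o) 0 = 0 := by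
      have := HasDerivAt.fun_sum (u := univ) fun o _ => (WT_diff ρ W T (xU ∅) o).hasDerivAt
      have e : (fun t => ∑ o, WT (bt ρ t) W T (xU ∅) o) = fun _ => 1 := by
        funext t
        exact WT_sum _ (fun k => bern_sum _) W hW1 T _
      rw [e] at this
      exact this.unique (hasDerivAt_const _ _)
    have h4 : ∑ o, ∑ k, ρ k * (W (xU {k}) o - W (xU ∅) o) = 0 := by
      rw [Finset.sum_comm]
      refine Finset.sum_eq_zero fun k _ => ?_
      rw [← Finset.mul_sum, Finset.sum_sub_distrib, hW1, hW1]; simp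
    rw [h3, h4]; simp
  constructor
  · have h := master ρ f 0 hcont hd
    unfold GT
    convert! h using 1
    rw [zero_add, hval1 _ hz, ← Finset.sum_subset (Finset.subset_univ T)]
    · refine Finset.sum_congr rfl fun k hk => ?_
      simp only [hf, WT_zero, (Qav_deriv ρ W _).2, hinT k hk]
    · intro k _ hk
      rw [hval1 _ (hnotT k hk)]; simp
  · unfold GT
    rw [master_zero ρ f]
    exact hval1 _ hz

lemma rpow_sum_deriv (P a : O → ℝ) (hP1 : ∑ o, P o = 1) (ha : ∀ o, P o ≠ 0 → 0 < a o)
    (c : ℝ) (hc : ∑ o, P o * Real.log (a o) < c) :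
    ∀ᶠ s in 𝓝[>] (0 : ℝ), ∑ o, P o * a o ^ s - 1 < s * c := by
  have h : HasDerivAt (fun s : ℝ => ∑ o, P o * a o ^ s) (∑ o, P o * Real.log (a o)) 0 := by
    refine HasDerivAt.fun_sum fun o _ => ?_
    by_cases h0 : P o = 0
    · simp only [h0, zero_mul]; exact hasDerivAt_const _ _
    · have := ((hasDerivAt_id (0 : ℝ)).const_rpow (ha o h0)).const_mul (P o)
      simpa using this
  rw [hasDerivAt_iff_tendsto_slope_zero] at h
  have h1 := h.mono_left (nhdsWithin_mono (0:ℝ) (fun t (ht : t ∈ Set.Ioi (0:ℝ)) => ne_of_gt ht))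
  filter_upwards [h1.eventually_lt_const hc, self_mem_nhdsWithin] with t ht htp
  have htp' : 0 < t := htp
  simp only [zero_add, smul_eq_mul, Real.rpow_zero, mul_one, hP1] at ht
  rwa [inv_mul_lt_iff₀ htp'] at ht

lemma phi_bound (r : ℝ) (hr : |r| ≤ 1 / 2) :
    |(1 + r) * Real.log (1 + r) - r - r ^ 2 / 2| ≤ 4 * |r| ^ 3 := by
  have h := Real.abs_log_sub_add_sum_range_le (x := -r) (by rw [abs_neg]; linarith) 2
  simp only [Finset.sum_range_succ, Finset.sum_range_zero, abs_neg] at h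
  norm_num at h
  set e := -r + r ^ 2 / 2 + Real.log (1 + r) with he
  have h0 := abs_nonneg r
  have h1 : |e| ≤ 2 * |r| ^ 3 := by
    refine h.trans ?_
    rw [div_le_iff₀ (by linarith)]
    nlinarith [pow_nonneg h0 3]
  have h2 : (1 + r) * Real.log (1 + r) - r - r ^ 2 / 2 = -(r ^ 3 / 2) + (1 + r) * e := by
    rw [he]; ring
  rw [h2]
  have h3 : |1 + r| ≤ 3 / 2 := by
    refine (abs_add_le _ _).trans ?_
    rw [abs_one]; linarith
  calc |-(r ^ 3 / 2) + (1 + r) * e| ≤ |-(r ^ 3 / 2)| + |(1 + r) * e| := abs_add_le _ _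
    _ = |r| ^ 3 / 2 + |1 + r| * |e| := by
        rw [abs_neg, abs_div, abs_pow, abs_mul]; norm_num
    _ ≤ |r| ^ 3 / 2 + 3 / 2 * (2 * |r| ^ 3) := by
        gcongr
    _ ≤ _ := by nlinarith [pow_nonneg h0 3]

lemma phi_lim (h : ℝ → ℝ) (d : ℝ) (hd : HasDerivAt h d 0) (h0 : h 0 = 1) :
    Tendsto (fun t => (h t * Real.log (h t) - h t + 1) / t ^ 2) (𝓝[>] (0 : ℝ)) (𝓝 (d ^ 2 / 2)) := by
  have hr : Tendsto (fun t => h t - 1) (𝓝[>] (0 : ℝ)) (𝓝 0) := by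
    have := (hd.continuousAt.tendsto.mono_left (nhdsWithin_le_nhds (s := Set.Ioi (0:ℝ)))).sub_const 1
    rwa [h0, sub_self] at this
  have hs : Tendsto (fun t => (h t - 1) / t) (𝓝[>] (0 : ℝ)) (𝓝 d) := by
    rw [hasDerivAt_iff_tendsto_slope_zero] at hd
    have h1 := hd.mono_left (nhdsWithin_mono (0:ℝ) (fun t (ht : t ∈ Set.Ioi (0:ℝ)) => ne_of_gt ht))
    refine h1.congr fun t => ?_
    simp [h0]; ring
  have h1 : Tendsto (fun t => ((h t - 1) / t) ^ 2 / 2) (𝓝[>] (0 : ℝ)) (𝓝 (d ^ 2 / 2)) :=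
    (hs.pow 2).div_const 2
  have h2 : Tendsto (fun t => 4 * (|(h t - 1) / t| ^ 2 * |h t - 1|)) (𝓝[>] (0 : ℝ)) (𝓝 0) := by
    have := ((hs.abs.pow 2).mul hr.abs).const_mul 4
    simpa using this
  have h3 : Tendsto (fun t => (h t * Real.log (h t) - h t + 1) / t ^ 2 - ((h t - 1) / t) ^ 2 / 2)
      (𝓝[>] (0 : ℝ)) (𝓝 0) := by
    refine squeeze_zero_norm' ?_ h2
    have hsm : ∀ᶠ t in 𝓝[>] (0 : ℝ), |h t - 1| < 1 / 2 := by
      have := hr.abs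
      rw [abs_zero] at this
      exact this.eventually_lt_const (by norm_num)
    filter_upwards [hsm, self_mem_nhdsWithin] with t ht htp
    have htp' : 0 < t := htp
    have hb := phi_bound (h t - 1) ht.le
    rw [Real.norm_eq_abs]
    have e : (h t * Real.log (h t) - h t + 1) / t ^ 2 - ((h t - 1) / t) ^ 2 / 2 =
        ((1 + (h t - 1)) * Real.log (1 + (h t - 1)) - (h t - 1) - (h t - 1) ^ 2 / 2) / t ^ 2 := by
      rw [show 1 + (h t - 1) = h t by ring]
      field_simp
      ring
    rw [e, abs_div, abs_of_pos (pow_pos htp' 2), div_le_iff₀ (pow_pos htp' 2), abs_div,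
      abs_of_pos htp']
    refine hb.trans (le_of_eq ?_)
    field_simp
  have := h3.add h1
  simpa using this

lemma kl_lim (ρ : Fin K → ℝ) (W : (Fin K → Bool) → O → ℝ) (hW : ∀ x z, 0 ≤ W x z)
    (hW1 : ∀ x, ∑ z, W x z = 1)
    (hAC : ∀ o, W (xU ∅) o = 0 → ∀ x, W x o = 0) :
    Tendsto (fun t => klDiv (Qav (bt ρ t) W) (W (xU ∅)) / t ^ 2) (𝓝[>] (0 : ℝ))
      (𝓝 (chiRho W ρ / 2)) := by
  have e : ∀ t : ℝ, klDiv (Qav (bt ρ t) W) (W (xU ∅)) / t ^ 2 =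
      ∑ o, W (xU ∅) o * (((Qav (bt ρ t) W o / W (xU ∅) o) * Real.log (Qav (bt ρ t) W o / W (xU ∅) o)
        - Qav (bt ρ t) W o / W (xU ∅) o + 1) / t ^ 2) := by
    intro t
    have h1 : klDiv (Qav (bt ρ t) W) (W (xU ∅)) = ∑ o, (Qav (bt ρ t) W o *
        Real.log (Qav (bt ρ t) W o / W (xU ∅) o) - Qav (bt ρ t) W o + W (xU ∅) o) := by
      rw [Finset.sum_add_distrib, Finset.sum_sub_distrib, hW1, Qav_sum _ (fun k => bern_sum _) W hW1]
      unfold klDiv; ring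
    rw [h1, Finset.sum_div]
    refine Finset.sum_congr rfl fun o _ => ?_
    by_cases h : W (xU ∅) o = 0
    · simp [h, Qav, hAC o h]
    · field_simp
  simp_rw [e]
  unfold chiRho
  rw [Finset.sum_div]
  refine tendsto_finsetSum _ fun o _ => ?_
  by_cases h : W (xU ∅) o = 0
  · simp [h]
  · have hq := Qav_deriv ρ W o
    have := (phi_lim (fun t => Qav (bt ρ t) W o / W (xU ∅) o) _ (hq.1.div_const _)
      (by rw [hq.2, div_self h])).const_mul (W (xU ∅) o)
    convert! this using 2
    field_simp

end calc1

section final1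
variable {K n : ℕ} {Y Z : Type} [Fintype Y] [Fintype Z]

lemma avg_exists {C : Type*} [Fintype C] (w X : C → ℝ) (R : ℝ) (hw0 : ∀ c, 0 ≤ w c)
    (hw1 : ∑ c, w c = 1) (h : ∑ c, w c * X c ≤ R) : ∃ c, X c ≤ R := by
  by_contra! hc
  have : ∑ c, w c * R < ∑ c, w c * X c := by
    refine Finset.sum_lt_sum (fun c _ => mul_le_mul_of_nonneg_left (hc c).le (hw0 c)) ?_
    by_contra! hz
    have : ∀ c, w c = 0 := by
      intro c
      by_contra hne
      have h1 := hz c (Finset.mem_univ _)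
      have h2 : 0 < w c := lt_of_le_of_ne (hw0 c) (Ne.symm hne)
      exact absurd (mul_lt_mul_of_pos_left (hc c) h2) (not_lt.2 h1)
    simp [this] at hw1
  rw [← Finset.sum_mul, hw1, one_mul] at this
  linarith

lemma bern_nonneg (a : ℝ) (h0 : 0 ≤ a) (h1 : a ≤ 1) (v : Bool) : 0 ≤ bern a v := by
  unfold bern; split_ifs <;> linarith

lemma one_code (Wy : (Fin K → Bool) → Y → ℝ) (Wz : (Fin K → Bool) → Z → ℝ)
    (hWy : ∀ x o, 0 ≤ Wy x o) (hWz : ∀ x o, 0 ≤ Wz x o) (hWz1 : ∀ x, ∑ o, Wz x o = 1)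
    (hpos : ∀ x o, Wy x o ≠ 0 → ∀ k, 0 < rr Wy k (x k) o)
    (ρ : Fin K → ℝ) (hρ : ∀ k, ρ k ∈ Set.Icc (0 : ℝ) 1) (t : ℝ) (ht0 : 0 ≤ t) (ht1 : t ≤ 1)
    (hQ : ∀ o, Qav (bt ρ t) Wz o = 0 → ∀ x, Wz x o = 0)
    (M L : Fin K → ℕ) (hM : ∀ k, 0 < M k) (hL : ∀ k, 0 < L k)
    (B : Finset (Fin K)) (hB : ∀ k, k ∉ B → M k = 1)
    (θ : Fin K → ℝ) (hθ : ∀ k, 0 < θ k) (sy : Fin K → ℝ) (hsy : ∀ k, 0 < sy k)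
    (ν : Fin K → ℝ) (hν0 : ∀ k, 0 ≤ ν k)
    (hν : ∀ k, ν k = ((M k : ℝ) * L k)⁻¹ ∨ (ν k = 0 ∧ ρ k = 0))
    (s : ℝ) (hs : 0 < s) (hs1 : s ≤ 1) (lam : ℝ) (hlam : 0 ≤ lam) :
    ∃ (enc : ∀ k, Fin (M k) × Fin (L k) → Fin n → Bool)
      (dec : (Fin n → Y) → (∀ k, Fin (L k)) → ∀ k, Fin (M k)),
      Pe Wy M L enc dec +
        lam * klDiv (Qhat Wz M L enc) (fun z : Fin n → Z => ∏ j, Qav (bt ρ t) Wz (z j)) ≤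
      ∑ k ∈ B, (θ k ^ sy k * HM (bt ρ t) Wy (rr Wy k) k (sy k) ^ n +
        (M k : ℝ) * ((θ k)⁻¹ * FA (bt ρ t) Wy (rr Wy k) k ^ n)) +
      lam * (s⁻¹ * ∑ T ∈ Finset.univ.erase (∅ : Finset (Fin K)), (∏ k ∈ T, ν k) ^ s *
        GT (bt ρ t) Wz T s ^ n) := by
  have hb : ∀ k, ∑ v, bt ρ t k v = 1 := fun k => bern_sum _
  have hb0 : ∀ k v, 0 ≤ bt ρ t k v := fun k v => bern_nonneg _ (mul_nonneg ht0 (hρ k).1)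
    (mul_le_one₀ ht1 (hρ k).1 (hρ k).2) v
  have hrr0 : ∀ k v o, 0 ≤ rr Wy k v o := by
    intro k v o
    unfold rr; split_ifs
    · exact div_nonneg (hWy _ _) (hWy _ _)
    · exact zero_le_one
  haveI : ∀ k, Nonempty (Fin (M k) × Fin (L k)) := fun k => ⟨(⟨0, hM k⟩, ⟨0, hL k⟩)⟩
  have hp := fun k => pN_sum (n := n) (bt ρ t) hb k
  have hp0 := fun k x => pN_nonneg (n := n) (bt ρ t) hb0 k x
  obtain ⟨dec, hdec⟩ := reliab (pN (bt ρ t) n) hp hp0 (WN Wy n) (WN_nonneg Wy hWy) M L hM hL B hB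
    (fun k x y => ∏ j, rr Wy k (x j) (y j))
    (fun k x y => Finset.prod_nonneg fun j _ => hrr0 _ _ _)
    (by
      intro x y h k
      refine Finset.prod_pos fun j _ => ?_
      unfold WN prodChannel at h
      exact hpos (fun k => x k j) (y j) (Finset.prod_ne_zero_iff.1 h j (Finset.mem_univ _)) k)
    θ hθ sy hsy
  have hres := resolv (I := fun k => Fin (M k) × Fin (L k)) (pN (bt ρ t) n) hp hp0 (WN Wz n)
    (WN_nonneg Wz hWz) (WN_sum Wz hWz1)
    (by
      intro z hz x
      rw [Qav_nfold] at hz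
      obtain ⟨j, _, hj⟩ := Finset.prod_eq_zero_iff.1 hz
      unfold WN prodChannel
      exact Finset.prod_eq_zero (Finset.mem_univ j) (hQ _ hj _))
    ν hν0
    (by
      intro k
      rcases hν k with h | ⟨h, h0⟩
      · left; rw [h]; simp
      · right
        refine ⟨h, ?_⟩
        have e : ∀ x, pN (bt ρ t) n k x = kd x (fun _ => false) := by
          intro x
          unfold pN
          rw [← kd_pi]
          refine Finset.prod_congr rfl fun j _ => ?_
          rw [← bern_zero]; simp [bt, h0]
        intro x x'
        rw [e, e]
        by_cases hx : x = fun _ => false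
        · rw [hx]
        · rw [kd, if_neg hx, zero_mul, zero_mul])
    s hs hs1
  simp_rw [GT_nfold (bt ρ t) hb0 Wz hWz] at hres
  simp_rw [HM_nfold (bt ρ t) Wy (rr Wy _) (hrr0 _) _ _ _ (hθ _).le, FA_nfold] at hdec
  have key := avg_exists (wt (I := fun k => Fin (M k) × Fin (L k)) (pN (bt ρ t) n))
    (fun c => PeG (WN Wy n) M L c (dec c) + lam * klDiv (Qh (WN Wz n) c) (Qav (pN (bt ρ t) n) (WN Wz n)))
    _ (wt_nonneg _ hp0) (wt_sum _ hp) (by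
      have := add_le_add hdec (mul_le_mul_of_nonneg_left hres hlam)
      refine le_trans (le_of_eq ?_) this
      rw [Finset.mul_sum, ← Finset.sum_add_distrib]
      exact Finset.sum_congr rfl fun c _ => by ring)
  obtain ⟨c, hc⟩ := key
  refine ⟨c, dec c, ?_⟩
  rw [Pe_eq, Qh_eq]
  have e : (fun z : Fin n → Z => ∏ j, Qav (bt ρ t) Wz (z j)) = Qav (pN (bt ρ t) n) (WN Wz n) := by
    funext z; rw [Qav_nfold]
  rw [e]
  exact hc

lemma delta_decomp (P : (Fin n → Z) → ℝ) (q q0 : Z → ℝ) (hP : ∀ z, 0 ≤ P z) (hP1 : ∑ z, P z = 1)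
    (hq : ∀ o, 0 ≤ q o) (hq1 : ∑ o, q o = 1) (hq01 : ∀ o, q0 o = 0 ↔ q o = 0)
    (hAC : ∀ z, ∏ j, q (z j) = 0 → P z = 0)
    (hlog : ∀ o, |Real.log (q o / q0 o)| ≤ 1) :
    |klDiv P (fun z => ∏ j, q0 (z j)) - n * klDiv q q0| ≤
      klDiv P (fun z => ∏ j, q (z j)) + n * (2 * Real.sqrt (klDiv P (fun z => ∏ j, q (z j)))) := by
  have hQ0 : ∀ z : Fin n → Z, 0 ≤ ∏ j, q (z j) := fun z => Finset.prod_nonneg fun j _ => hq _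
  have hQ1 : ∑ z : Fin n → Z, ∏ j, q (z j) = 1 := by rw [sum_prod_pow, hq1, one_pow]
  set F := klDiv P (fun z => ∏ j, q (z j)) with hF
  have hF0 : 0 ≤ F := kl_nonneg' P _ hP hP1 hQ0 hQ1 hAC
  have htv := tv_bound P (fun z => ∏ j, q (z j)) hP hP1 hQ0 hQ1 hAC
    (fun z => ∑ j, Real.log (q (z j) / q0 (z j))) n (Nat.cast_nonneg _) (by
      intro z _
      refine (Finset.abs_sum_le_sum_abs _ _).trans ?_
      refine (Finset.sum_le_sum fun j _ => hlog (z j)).trans ?_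
      simp)
  rw [sum_marg q (fun o => Real.log (q o / q0 o)) hq1, ← hF] at htv
  have e : klDiv P (fun z => ∏ j, q0 (z j)) = F + ∑ z, P z * ∑ j, Real.log (q (z j) / q0 (z j)) := by
    rw [hF]; unfold klDiv
    rw [← Finset.sum_add_distrib]
    refine Finset.sum_congr rfl fun z _ => ?_
    by_cases hz : P z = 0
    · simp [hz]
    have h1 : ∏ j, q (z j) ≠ 0 := fun h => hz (hAC z h)
    have h2 : ∀ j, q (z j) ≠ 0 := fun j => Finset.prod_ne_zero_iff.1 h1 j (Finset.mem_univ _)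
    have h3 : ∀ j, q0 (z j) ≠ 0 := fun j h => h2 j ((hq01 _).1 h)
    have h4 : ∏ j, q0 (z j) ≠ 0 := Finset.prod_ne_zero_iff.2 fun j _ => h3 j
    rw [← mul_add, ← Real.log_prod (fun j _ => div_ne_zero (h2 j) (h3 j)), Finset.prod_div_distrib,
      ← Real.log_mul (div_ne_zero hz h1) (div_ne_zero h1 h4), div_mul_div_cancel₀ h1]
  rw [e]
  have hk : klDiv q q0 = ∑ o, q o * Real.log (q o / q0 o) := rfl
  rw [hk]
  calc _ ≤ |F| + |_| := by
        rw [add_sub_assoc]; exact abs_add_le _ _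
    _ ≤ _ := by rw [abs_of_nonneg hF0]; linarith

end final1

section final2
variable {K : ℕ} {O : Type} [Fintype O]

/-- Input weight parameter. -/
def tn (n : ℕ) : ℝ := (n : ℝ) ^ (-(3 / 4) : ℝ)

lemma tn_pos {n : ℕ} (hn : 1 ≤ n) : 0 < tn n :=
  Real.rpow_pos_of_pos (by exact_mod_cast hn) _

lemma tn_tendsto : Tendsto tn atTop (𝓝[>] 0) := by
  rw [tendsto_nhdsWithin_iff]
  constructor
  · exact (tendsto_rpow_neg_atTop (by norm_num : (0 : ℝ) < 3 / 4)).comp tendsto_natCast_atTop_atTop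
  · filter_upwards [eventually_ge_atTop 1] with n hn using tn_pos hn

lemma n_tn {n : ℕ} (hn : 1 ≤ n) : (n : ℝ) * tn n = (n : ℝ) ^ (1 / 4 : ℝ) := by
  have h : (0 : ℝ) < n := by exact_mod_cast hn
  unfold tn
  nth_rewrite 1 [← Real.rpow_one (n : ℝ)]
  rw [← Real.rpow_add h]; norm_num

lemma n_tn_tendsto : Tendsto (fun n : ℕ => (n : ℝ) * tn n) atTop atTop := by
  have h := (tendsto_rpow_atTop (by norm_num : (0 : ℝ) < 1 / 4)).comp tendsto_natCast_atTop_atTop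
  refine h.congr' ?_
  filter_upwards [eventually_ge_atTop 1] with n hn using (n_tn hn).symm

lemma n_tn_sq : Tendsto (fun n : ℕ => (n : ℝ) * tn n ^ 2) atTop (𝓝 0) := by
  have h := (tendsto_rpow_neg_atTop (by norm_num : (0 : ℝ) < 1 / 2)).comp tendsto_natCast_atTop_atTop
  refine h.congr' ?_
  filter_upwards [eventually_ge_atTop 1] with n hn
  have h : (0 : ℝ) < n := by exact_mod_cast hn
  rw [pow_two, ← mul_assoc, n_tn hn]
  simp only [Function.comp, tn]
  rw [← Real.rpow_add h]; norm_num

lemma one_le_n_tn {n : ℕ} (hn : 1 ≤ n) : 1 ≤ (n : ℝ) * tn n := by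
  rw [n_tn hn]; exact Real.one_le_rpow (by exact_mod_cast hn) (by norm_num)

lemma n_tn_nonneg (n : ℕ) : 0 ≤ (n : ℝ) * tn n :=
  mul_nonneg (Nat.cast_nonneg _) (Real.rpow_nonneg (Nat.cast_nonneg _) _)

lemma decay (C c : ℝ) (hc : 0 < c) (f : ℕ → ℝ) (h0 : ∀ᶠ n in atTop, 0 ≤ f n)
    (h : ∀ᶠ n in atTop, f n ≤ C * Real.exp (-(c * ((n : ℝ) * tn n)))) :
    Tendsto (fun n : ℕ => ((n : ℝ) + 1) ^ 4 * f n) atTop (𝓝 0) := by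
  have h1 := ((tendsto_rpow_mul_exp_neg_mul_atTop_nhds_zero 16 c hc).comp n_tn_tendsto).const_mul
    (16 * C)
  rw [mul_zero] at h1
  refine tendsto_of_tendsto_of_tendsto_of_le_of_le' tendsto_const_nhds h1 ?_ ?_
  · filter_upwards [h0] with n hn using mul_nonneg (by positivity) hn
  · filter_upwards [h, h0, eventually_ge_atTop 1] with n hn h0n hn1
    have hn' : (1 : ℝ) ≤ n := by exact_mod_cast hn1
    have e : ((n : ℝ) * tn n) ^ (16 : ℝ) = (n : ℝ) ^ 4 := by
      rw [n_tn hn1, ← Real.rpow_mul (by linarith), ← Real.rpow_natCast]; norm_num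
    simp only [Function.comp]
    rw [e]
    have h4 : ((n : ℝ) + 1) ^ 4 ≤ 16 * (n : ℝ) ^ 4 := by
      calc ((n : ℝ) + 1) ^ 4 ≤ (2 * n) ^ 4 := by gcongr; linarith
        _ = _ := by ring
    calc ((n : ℝ) + 1) ^ 4 * f n ≤ (16 * (n : ℝ) ^ 4) * f n := by gcongr
      _ ≤ (16 * (n : ℝ) ^ 4) * (C * Real.exp (-(c * ((n : ℝ) * tn n)))) := by gcongr
      _ = _ := by rw [← neg_mul]; ring

lemma decay' (C c : ℝ) (hc : 0 < c) (f : ℕ → ℝ) (h0 : ∀ᶠ n in atTop, 0 ≤ f n)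
    (h : ∀ᶠ n in atTop, f n ≤ C * Real.exp (-(c * ((n : ℝ) * tn n)))) :
    Tendsto f atTop (𝓝 0) := by
  refine tendsto_of_tendsto_of_tendsto_of_le_of_le' tendsto_const_nhds (decay C c hc f h0 h) h0 ?_
  filter_upwards [h0] with n hn
  refine le_mul_of_one_le_left hn (one_le_pow₀ ?_)
  have : (0 : ℝ) ≤ n := Nat.cast_nonneg _
  linarith

lemma bt_nonneg (ρ : Fin K → ℝ) (hρ : ∀ k, ρ k ∈ Set.Icc (0 : ℝ) 1) (t : ℝ) (ht0 : 0 ≤ t)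
    (ht1 : t ≤ 1) : ∀ k v, 0 ≤ bt ρ t k v := fun k v => bern_nonneg _ (mul_nonneg ht0 (hρ k).1)
    (mul_le_one₀ ht1 (hρ k).1 (hρ k).2) v

lemma rr_nonneg (W : (Fin K → Bool) → O → ℝ) (hW : ∀ x o, 0 ≤ W x o) (k : Fin K) (v : Bool) (o : O) :
    0 ≤ rr W k v o := by
  unfold rr; split_ifs
  · exact div_nonneg (hW _ _) (hW _ _)
  · exact zero_le_one

lemma ev_t : ∀ᶠ t in 𝓝[>] (0 : ℝ), 0 < t ∧ t ≤ 1 := by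
  filter_upwards [self_mem_nhdsWithin, Ioo_mem_nhdsGT (zero_lt_one' ℝ)] with t h1 h2
  exact ⟨h1, h2.2.le⟩

lemma miss_tendsto (ρ : Fin K → ℝ) (hρ : ∀ k, ρ k ∈ Set.Icc (0 : ℝ) 1)
    (W : (Fin K → Bool) → O → ℝ) (hW : ∀ x o, 0 ≤ W x o) (hW1 : ∀ x, ∑ o, W x o = 1) (k : Fin K)
    (hAC : ∀ o, W (xU ∅) o = 0 → W (xU {k}) o = 0) (a μ : ℝ)
    (ha : a = klDiv (W (xU {k})) (W (xU ∅))) (ha0 : 0 < ρ k * a) (hμ : 0 < μ) :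
    ∃ s : ℝ, 0 < s ∧ Tendsto (fun n : ℕ => Real.exp ((n : ℝ) * tn n * ((1 - μ / 2) * (ρ k * a))) ^ s *
      HM (bt ρ (tn n)) W (rr W k) k s ^ n) atTop (𝓝 0) := by
  have hρk : 0 < ρ k := by
    rcases (hρ k).1.lt_or_eq with h | h
    · exact h
    · rw [← h] at ha0; simp at ha0
  have hapos : 0 < a := pos_of_mul_pos_right ha0 hρk.le
  have e : ∑ o, W (xU {k}) o * Real.log ((W (xU {k}) o / W (xU ∅) o)⁻¹) = -a := by
    rw [ha, klDiv, ← Finset.sum_neg_distrib]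
    exact Finset.sum_congr rfl fun o _ => by rw [Real.log_inv]; ring
  have h := rpow_sum_deriv (W (xU {k})) (fun o => (W (xU {k}) o / W (xU ∅) o)⁻¹) (hW1 _)
    (fun o ho => inv_pos.2 (div_pos (lt_of_le_of_ne (hW _ _) (Ne.symm ho))
      (lt_of_le_of_ne (hW _ _) (fun h => ho (hAC o h.symm)))))
    (-((1 - μ / 4) * a)) (by rw [e]; nlinarith)
  obtain ⟨s, hs, hs0⟩ := (h.and self_mem_nhdsWithin).exists
  have hs0 : 0 < s := hs0
  refine ⟨s, hs0, ?_⟩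
  obtain ⟨hd, hz⟩ := HM_deriv ρ W hW1 k s
  have hx := expo (fun t => HM (bt ρ t) W (rr W k) k s) _ (ρ k * (s * (-((1 - μ / 4) * a)))) hd hz
    (mul_lt_mul_of_pos_left hs hρk)
  have hnn : ∀ᶠ n in atTop, 0 ≤ HM (bt ρ (tn n)) W (rr W k) k s := by
    filter_upwards [tn_tendsto.eventually ev_t] with n hn
    refine Finset.sum_nonneg fun u _ => mul_nonneg (Finset.prod_nonneg fun l _ =>
      bt_nonneg ρ hρ _ hn.1.le hn.2 _ _) (Finset.sum_nonneg fun o _ => mul_nonneg (hW _ _) ?_)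
    exact Real.rpow_nonneg (inv_nonneg.2 (rr_nonneg W hW _ _ _)) _
  refine decay' 1 (s * (μ / 4) * (ρ k * a)) (by positivity) _ ?_ ?_
  · filter_upwards [hnn] with n hn using by positivity
  · filter_upwards [hnn, tn_tendsto.eventually hx] with n hn hxn
    calc _ ≤ Real.exp ((n : ℝ) * tn n * ((1 - μ / 2) * (ρ k * a))) ^ s *
          Real.exp (ρ k * (s * (-((1 - μ / 4) * a))) * tn n) ^ n := by gcongr
      _ = _ := by
        rw [← Real.exp_mul, ← Real.exp_nat_mul, ← Real.exp_add, one_mul]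
        congr 1; ring

lemma fa_tendsto (ρ : Fin K → ℝ) (hρ : ∀ k, ρ k ∈ Set.Icc (0 : ℝ) 1)
    (W : (Fin K → Bool) → O → ℝ) (hW : ∀ x o, 0 ≤ W x o) (hW1 : ∀ x, ∑ o, W x o = 1) (k : Fin K)
    (hAC : ∀ o, W (xU ∅) o = 0 → W (xU {k}) o = 0) (a μ : ℝ)
    (ha0 : 0 < ρ k * a) (hμ : 0 < μ) (M : ℕ → ℕ)
    (hM : ∀ n : ℕ, (M n : ℝ) ≤ 2 * Real.exp ((n : ℝ) * tn n * ((1 - μ) * (ρ k * a)))) :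
    Tendsto (fun n : ℕ => (M n : ℝ) * ((Real.exp ((n : ℝ) * tn n * ((1 - μ / 2) * (ρ k * a))))⁻¹ *
      FA (bt ρ (tn n)) W (rr W k) k ^ n)) atTop (𝓝 0) := by
  obtain ⟨hd, hz⟩ := FA_deriv ρ W hW1 k hAC
  have hx := expo (fun t => FA (bt ρ t) W (rr W k) k) _ (μ / 4 * (ρ k * a)) hd hz (by positivity)
  have hnn : ∀ᶠ n in atTop, 0 ≤ FA (bt ρ (tn n)) W (rr W k) k := by
    filter_upwards [tn_tendsto.eventually ev_t] with n hn
    have hb := bt_nonneg ρ hρ _ hn.1.le hn.2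
    refine Finset.sum_nonneg fun u _ => mul_nonneg (Finset.prod_nonneg fun l _ =>
      hb _ _) (Finset.sum_nonneg fun o _ => mul_nonneg (hW _ _) ?_)
    exact Finset.sum_nonneg fun v _ => mul_nonneg (hb _ _) (rr_nonneg W hW _ _ _)
  refine decay' 2 (μ / 4 * (ρ k * a)) (by positivity) _ ?_ ?_
  · filter_upwards [hnn] with n hn using by positivity
  · filter_upwards [hnn, tn_tendsto.eventually hx] with n hn hxn
    calc _ ≤ (2 * Real.exp ((n : ℝ) * tn n * ((1 - μ) * (ρ k * a)))) *
          ((Real.exp ((n : ℝ) * tn n * ((1 - μ / 2) * (ρ k * a))))⁻¹ *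
          Real.exp (μ / 4 * (ρ k * a) * tn n) ^ n) := by
            gcongr
            exact hM n
      _ = _ := by
        rw [← Real.exp_neg, ← Real.exp_nat_mul, ← Real.exp_add, mul_assoc, ← Real.exp_add]
        congr 2; ring

lemma res_tendsto (ρ : Fin K → ℝ) (hρ : ∀ k, ρ k ∈ Set.Icc (0 : ℝ) 1)
    (W : (Fin K → Bool) → O → ℝ) (hW : ∀ x o, 0 ≤ W x o) (hW1 : ∀ x, ∑ o, W x o = 1)
    (hAC : ∀ o, W (xU ∅) o = 0 → ∀ x, W x o = 0) (s : ℝ) (hs : 0 < s) (e : Fin K → ℝ)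
    (he : ∀ k, ∑ o, W (xU {k}) o * (W (xU {k}) o / W (xU ∅) o) ^ s - 1 < s * e k)
    (ν : ℕ → Fin K → ℝ) (hν0 : ∀ n k, 0 ≤ ν n k)
    (hν : ∀ n k, ν n k ≤ Real.exp (-((n : ℝ) * tn n * (ρ k * e k))))
    (hνz : ∀ n k, ρ k = 0 → ν n k = 0) (T : Finset (Fin K)) (hT : T.Nonempty) :
    Tendsto (fun n : ℕ => ((n : ℝ) + 1) ^ 4 * ((∏ k ∈ T, ν n k) ^ s * GT (bt ρ (tn n)) W T s ^ n))
      atTop (𝓝 0) := by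
  by_cases hz : ∃ k ∈ T, ρ k = 0
  · obtain ⟨k, hk, hk0⟩ := hz
    have : ∀ n, ∏ k ∈ T, ν n k = 0 := fun n => Finset.prod_eq_zero hk (hνz n k hk0)
    simp [this, Real.zero_rpow hs.ne']
  push Not at hz
  have hρT : ∀ k ∈ T, 0 < ρ k := fun k hk => lt_of_le_of_ne (hρ k).1 (Ne.symm (hz k hk))
  obtain ⟨hd, h1⟩ := GT_deriv ρ W hW1 hAC T s hs
  have hlt : ∑ k ∈ T, ρ k * (∑ o, W (xU {k}) o * (W (xU {k}) o / W (xU ∅) o) ^ s - 1) <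
      ∑ k ∈ T, ρ k * (s * e k) :=
    Finset.sum_lt_sum_of_nonempty hT fun k hk => mul_lt_mul_of_pos_left (he k) (hρT k hk)
  obtain ⟨κ, hκ1, hκ2⟩ := exists_between hlt
  have hx := expo (fun t => GT (bt ρ t) W T s) _ κ hd h1 hκ1
  have hnn : ∀ᶠ n in atTop, 0 ≤ GT (bt ρ (tn n)) W T s := by
    filter_upwards [tn_tendsto.eventually ev_t] with n hn
    have hb := bt_nonneg ρ hρ _ hn.1.le hn.2
    refine Finset.sum_nonneg fun u _ => mul_nonneg (Finset.prod_nonneg fun l _ =>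
      hb _ _) (Finset.sum_nonneg fun o _ => mul_nonneg (hW _ _) ?_)
    exact Real.rpow_nonneg (div_nonneg (WT_nonneg _ hb W hW _ _ _) (Qav_nonneg _ hb W hW _)) _
  have hp0 : ∀ n, 0 ≤ ∏ k ∈ T, ν n k := fun n => Finset.prod_nonneg fun k _ => hν0 n k
  refine decay 1 (∑ k ∈ T, ρ k * (s * e k) - κ) (by linarith) _ ?_ ?_
  · filter_upwards [hnn] with n hn using mul_nonneg (Real.rpow_nonneg (hp0 n) _) (pow_nonneg hn _)
  · filter_upwards [hnn, tn_tendsto.eventually hx] with n hn hxn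
    have hle : ∏ k ∈ T, ν n k ≤ Real.exp (∑ k ∈ T, -((n : ℝ) * tn n * (ρ k * e k))) := by
      rw [Real.exp_sum]
      exact Finset.prod_le_prod (fun k _ => hν0 n k) fun k _ => hν n k
    calc _ ≤ Real.exp (∑ k ∈ T, -((n : ℝ) * tn n * (ρ k * e k))) ^ s * Real.exp (κ * tn n) ^ n := by
            refine mul_le_mul (Real.rpow_le_rpow (hp0 n) hle hs.le) (pow_le_pow_left₀ hn hxn _)
              (pow_nonneg hn _) (by positivity)
      _ = _ := by
        rw [← Real.exp_mul, ← Real.exp_nat_mul, ← Real.exp_add, one_mul]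
        congr 1
        have : ∑ k ∈ T, -((n : ℝ) * tn n * (ρ k * e k)) = -((n : ℝ) * tn n * ∑ k ∈ T, ρ k * e k) := by
          rw [Finset.sum_neg_distrib, Finset.mul_sum]
        rw [this]
        have : ∑ k ∈ T, ρ k * (s * e k) = s * ∑ k ∈ T, ρ k * e k := by
          rw [Finset.mul_sum]; exact Finset.sum_congr rfl fun k _ => by ring
        rw [this]; ring

lemma ceil_bounds (a : ℝ) (ha : 0 ≤ a) : 0 < ⌈Real.exp a⌉₊ ∧ Real.exp a ≤ (⌈Real.exp a⌉₊ : ℝ) ∧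
    (⌈Real.exp a⌉₊ : ℝ) ≤ 2 * Real.exp a := by
  refine ⟨Nat.ceil_pos.2 (Real.exp_pos _), Nat.le_ceil _, ?_⟩
  have := Nat.ceil_lt_add_one (Real.exp_pos a).le
  have := Real.one_le_exp ha
  linarith

lemma log_ceil_lim (c : ℝ) (hc : 0 ≤ c) :
    Tendsto (fun n : ℕ => Real.log (⌈Real.exp ((n : ℝ) * tn n * c)⌉₊ : ℝ) / ((n : ℝ) * tn n)) atTop (𝓝 c) := by
  have h2 : Tendsto (fun n : ℕ => c + Real.log 2 / ((n : ℝ) * tn n)) atTop (𝓝 c) := by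
    simpa using (tendsto_const_nhds (x := c)).add (n_tn_tendsto.const_div_atTop (Real.log 2))
  refine tendsto_of_tendsto_of_tendsto_of_le_of_le' tendsto_const_nhds h2 ?_ ?_
  · filter_upwards [eventually_ge_atTop 1] with n hn
    have h1 := one_le_n_tn hn
    obtain ⟨hp, hl, hu⟩ := ceil_bounds ((n : ℝ) * tn n * c) (mul_nonneg (n_tn_nonneg n) hc)
    rw [le_div_iff₀ (by linarith), Real.le_log_iff_exp_le (by exact_mod_cast hp), mul_comm]
    exact hl
  · filter_upwards [eventually_ge_atTop 1] with n hn
    have h1 := one_le_n_tn hn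
    obtain ⟨hp, hl, hu⟩ := ceil_bounds ((n : ℝ) * tn n * c) (mul_nonneg (n_tn_nonneg n) hc)
    have h3 := Real.log_le_log (by exact_mod_cast hp) hu
    rw [Real.log_mul (by norm_num) (Real.exp_pos _).ne', Real.log_exp] at h3
    rw [div_le_iff₀ (by linarith), add_mul, div_mul_cancel₀ _ (by linarith)]
    linarith

lemma delta_lim (D : ℝ → ℝ) (χ : ℝ) (hD : Tendsto (fun t => D t / t ^ 2) (𝓝[>] 0) (𝓝 (χ / 2)))
    (δ F R : ℕ → ℝ) (hF : ∀ᶠ n in atTop, 0 ≤ F n)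
    (hR : Tendsto R atTop (𝓝 0)) (hFR : ∀ᶠ n : ℕ in atTop, ((n : ℝ) + 1) ^ 4 * F n ≤ R n)
    (hδ : ∀ᶠ n : ℕ in atTop, |δ n - n * D (tn n)| ≤ F n + n * (2 * Real.sqrt (F n))) :
    Tendsto (fun n : ℕ => δ n / ((n : ℝ) * tn n ^ 2)) atTop (𝓝 (χ / 2)) := by
  have h1 := hD.comp tn_tendsto
  have h2 : Tendsto (fun n : ℕ => δ n / ((n : ℝ) * tn n ^ 2) - D (tn n) / tn n ^ 2) atTop (𝓝 0) := by
    have h3 : Tendsto (fun n => R n + 2 * Real.sqrt (R n)) atTop (𝓝 0) := by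
      have := hR.add ((hR.sqrt).const_mul 2)
      simpa using this
    refine squeeze_zero_norm' ?_ h3
    filter_upwards [hF, hFR, hδ, eventually_ge_atTop 1] with n h0 hr hd hn
    have ht := tn_pos hn
    have hn' : (1 : ℝ) ≤ n := by exact_mod_cast hn
    have h1 := one_le_n_tn hn
    have e : δ n / ((n : ℝ) * tn n ^ 2) - D (tn n) / tn n ^ 2 =
        (δ n - n * D (tn n)) / ((n : ℝ) * tn n ^ 2) := by field_simp
    have hpos : 0 < (n : ℝ) * tn n ^ 2 := by positivity
    have hinv : 1 ≤ n * ((n : ℝ) * tn n ^ 2) := by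
      have : n * ((n : ℝ) * tn n ^ 2) = (n * tn n) ^ 2 := by ring
      rw [this]; exact one_le_pow₀ h1
    rw [e, Real.norm_eq_abs, abs_div, abs_of_pos hpos, div_le_iff₀ hpos]
    have hR0 : 0 ≤ R n := le_trans (by positivity) hr
    have hs : (n : ℝ) ^ 2 * Real.sqrt (F n) ≤ Real.sqrt (R n) := by
      apply Real.le_sqrt_of_sq_le
      rw [mul_pow, Real.sq_sqrt h0]
      refine le_trans ?_ hr
      have : ((n : ℝ) ^ 2) ^ 2 = (n : ℝ) ^ 4 := by ring
      rw [this]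
      gcongr
      linarith
    have hf : n * F n ≤ R n := by
      refine le_trans ?_ hr
      gcongr
      calc (n : ℝ) ≤ n + 1 := by linarith
        _ ≤ (n + 1) ^ 4 := le_self_pow₀ (by linarith) (by norm_num)
    have hX : n * (F n + n * (2 * Real.sqrt (F n))) ≤ R n + 2 * Real.sqrt (R n) := by nlinarith
    have hX0 : 0 ≤ F n + n * (2 * Real.sqrt (F n)) := by positivity
    calc _ ≤ _ := hd
      _ ≤ (n * ((n : ℝ) * tn n ^ 2)) * (F n + n * (2 * Real.sqrt (F n))) := le_mul_of_one_le_left hX0 hinv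
      _ = (n * (F n + n * (2 * Real.sqrt (F n)))) * ((n : ℝ) * tn n ^ 2) := by ring
      _ ≤ _ := mul_le_mul_of_nonneg_right hX hpos.le
  have := h2.add h1
  simpa [Function.comp] using this

lemma ratio_lim (χ c : ℝ) (hχ : 0 < χ) (δ ℓ : ℕ → ℝ)
    (hδ : Tendsto (fun n : ℕ => δ n / ((n : ℝ) * tn n ^ 2)) atTop (𝓝 (χ / 2)))
    (hl : Tendsto (fun n : ℕ => ℓ n / ((n : ℝ) * tn n)) atTop (𝓝 c)) :
    Tendsto (fun n : ℕ => ℓ n / Real.sqrt ((n : ℝ) * δ n)) atTop (𝓝 (Real.sqrt (2 / χ) * c)) := by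
  have h1 := hl.div hδ.sqrt (Real.sqrt_ne_zero'.2 (by positivity))
  have e : c / Real.sqrt (χ / 2) = Real.sqrt (2 / χ) * c := by
    rw [← inv_div χ 2, Real.sqrt_inv]; field_simp
  rw [e] at h1
  refine h1.congr' ?_
  filter_upwards [eventually_ge_atTop 1] with n hn
  have ht := tn_pos hn
  have hn' : (1 : ℝ) ≤ n := by exact_mod_cast hn
  have h1 := one_le_n_tn hn
  have e : (n : ℝ) * δ n = (n * tn n) ^ 2 * (δ n / ((n : ℝ) * tn n ^ 2)) := by field_simp
  simp only [Pi.div_apply]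
  rw [e, Real.sqrt_mul (by positivity), Real.sqrt_sq (by linarith), div_div]

end final2

/-- achievability: for every `ρ` in the simplex, every `αₙ ∈ (0,1)` with
`n αₙ → ∞` and `n αₙ² → 0`, and every `μ ∈ (0,1)`, there exists a sequence of codes which is
reliable, covert, and attains the prescribed message and key throughputs. -/
theorem covert_achievability (K : ℕ) (hK : 2 ≤ K)
    {Y Z : Type} [Fintype Y] [Fintype Z]
    (Wy : (Fin K → Bool) → Y → ℝ) (Wz : (Fin K → Bool) → Z → ℝ)
    (hWy : ∀ x, IsDist (Wy x)) (hWz : ∀ x, IsDist (Wz x))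
    (hACz : ∀ U : Finset (Fin K), U.Nonempty → AbsCont (Wz (xU U)) (Wz (xU ∅)))
    (hNC : ¬ ∃ lam : Finset (Fin K) → ℝ, (∀ T, 0 ≤ lam T) ∧ lam ∅ = 0 ∧
      (∑ T : Finset (Fin K), lam T) = 1 ∧
      ∀ z, Wz (xU (∅ : Finset (Fin K))) z = ∑ T : Finset (Fin K), lam T * Wz (xU T) z)
    (hACy : ∀ U : Finset (Fin K), U.Nonempty → ∀ k ∈ U,
      AbsCont (Wy (xU U)) (Wy (xU {k})) ∧ AbsCont (Wy (xU {k})) (Wy (xU ∅)))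
    (ρ : Fin K → ℝ) (hρ : ∀ k, ρ k ∈ Set.Icc (0 : ℝ) 1) (hρ1 : ∑ k, ρ k = 1)
    (α : ℕ → ℝ) (hα : ∀ n, α n ∈ Set.Ioo (0 : ℝ) 1)
    (hnα : Tendsto (fun n : ℕ => (n : ℝ) * α n) atTop atTop)
    (hnα2 : Tendsto (fun n : ℕ => (n : ℝ) * (α n) ^ 2) atTop (𝓝 0))
    (μ : ℝ) (hμ : μ ∈ Set.Ioo (0 : ℝ) 1) :
    ∃ (M L : ℕ → Fin K → ℕ)
      (enc : ∀ n (k : Fin K), Fin (M n k) × Fin (L n k) → Fin n → Bool)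
      (dec : ∀ n, (Fin n → Y) → (∀ k, Fin (L n k)) → ∀ k, Fin (M n k)),
      (∀ n k, 0 < M n k) ∧ (∀ n k, 0 < L n k) ∧
      Tendsto (fun n => Pe Wy (M n) (L n) (enc n) (dec n)) atTop (𝓝 0) ∧
      Tendsto (fun n => deltaN Wz (M n) (L n) (enc n)) atTop (𝓝 0) ∧
      (∀ k, Tendsto (fun n => Real.log (M n k : ℝ) /
          Real.sqrt ((n : ℝ) * deltaN Wz (M n) (L n) (enc n))) atTop
        (𝓝 ((1 - μ) * Real.sqrt (2 / chiRho Wz ρ) *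
          (ρ k * klDiv (Wy (xU {k})) (Wy (xU ∅)))))) ∧
      (∀ k, Tendsto (fun n => Real.log (L n k : ℝ) /
          Real.sqrt ((n : ℝ) * deltaN Wz (M n) (L n) (enc n))) atTop
        (𝓝 (Real.sqrt (2 / chiRho Wz ρ) * ρ k *
          max ((1 + μ) * klDiv (Wz (xU {k})) (Wz (xU ∅)) -
            (1 - μ) * klDiv (Wy (xU {k})) (Wy (xU ∅))) 0))) := by
  have hy0 : ∀ x o, 0 ≤ Wy x o := fun x o => (hWy x).1 o
  have hy1 : ∀ x, ∑ o, Wy x o = 1 := fun x => (hWy x).2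
  have hz0 : ∀ x o, 0 ≤ Wz x o := fun x o => (hWz x).1 o
  have hz1 : ∀ x, ∑ o, Wz x o = 1 := fun x => (hWz x).2
  have hx : ∀ x : Fin K → Bool, x = xU (Finset.univ.filter fun k => x k = true) := by
    intro x; funext k; simp [xU]
  have hzAC : ∀ o, Wz (xU ∅) o = 0 → ∀ x, Wz x o = 0 := by
    intro o ho x
    rw [hx x]
    rcases (Finset.univ.filter fun k => x k = true).eq_empty_or_nonempty with h | h
    · rw [h]; exact ho
    · exact hACz _ h o ho
  have hyAC : ∀ k o, Wy (xU ∅) o = 0 → Wy (xU {k}) o = 0 := fun k o ho =>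
    (hACy {k} (Finset.singleton_nonempty k) k (Finset.mem_singleton_self k)).2 o ho
  have hpos : ∀ x o, Wy x o ≠ 0 → ∀ k, 0 < rr Wy k (x k) o := by
    intro x o h k
    unfold rr
    split_ifs with hk
    · have hm : k ∈ Finset.univ.filter fun k => x k = true := by simp [hk]
      obtain ⟨h1, h2⟩ := hACy _ ⟨k, hm⟩ k hm
      rw [hx x] at h
      have h3 : Wy (xU {k}) o ≠ 0 := fun h' => h (h1 o h')
      have h4 : Wy (xU ∅) o ≠ 0 := fun h' => h3 (h2 o h')
      exact div_pos (lt_of_le_of_ne (hy0 _ _) h3.symm) (lt_of_le_of_ne (hy0 _ _) h4.symm)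
    · exact one_pos
  set a : Fin K → ℝ := fun k => klDiv (Wy (xU {k})) (Wy (xU ∅)) with ha
  set d : Fin K → ℝ := fun k => klDiv (Wz (xU {k})) (Wz (xU ∅)) with hd
  have ha0 : ∀ k, 0 ≤ a k := fun k => kl_nonneg' _ _ (hy0 _) (hy1 _) (hy0 _) (hy1 _) (hyAC k)
  -- no nontrivial mixture of the single-user output laws equals the innocent one
  have hmix : ∀ w : Fin K → ℝ, (∀ k, 0 ≤ w k) → ∑ k, w k = 1 →
      ¬ ∀ o, Wz (xU ∅) o = ∑ k, w k * Wz (xU {k}) o := by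
    intro w hw hw1 hcon
    apply hNC
    have hsum : ∀ g : Finset (Fin K) → ℝ,
        ∑ T : Finset (Fin K), (∑ k, if T = {k} then w k else 0) * g T = ∑ k, w k * g {k} := by
      intro g
      simp_rw [Finset.sum_mul]
      rw [Finset.sum_comm]
      refine Finset.sum_congr rfl fun k _ => ?_
      rw [Finset.sum_eq_single {k}]
      · simp
      · intro T _ hT; rw [if_neg hT, zero_mul]
      · simp
    refine ⟨fun T => ∑ k, if T = {k} then w k else 0, ?_, ?_, ?_, ?_⟩
    · intro T
      refine Finset.sum_nonneg fun k _ => ?_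
      split_ifs
      · exact hw k
      · exact le_rfl
    · refine Finset.sum_eq_zero fun k _ => if_neg ?_
      exact (Finset.singleton_ne_empty k).symm
    · have := hsum (fun _ => 1)
      simpa [hw1] using this
    · intro o
      rw [hsum (fun T => Wz (xU T) o)]
      exact hcon o
  have hd0 : ∀ k, 0 < d k := by
    intro k
    refine kl_pos' _ _ (hz0 _) (hz1 _) (hz0 _) (hz1 _) (fun o ho => hzAC o ho _) ?_
    intro he
    refine hmix (fun l => if l = k then 1 else 0) ?_ (by simp) ?_
    · intro l; split_ifs <;> norm_num
    · intro o; simp [he]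
  have hχ : 0 < chiRho Wz ρ := by
    unfold chiRho
    have hnn : ∀ o ∈ (Finset.univ : Finset Z),
        0 ≤ (∑ k, ρ k * (Wz (xU {k}) o - Wz (xU ∅) o)) ^ 2 / Wz (xU ∅) o :=
      fun o _ => div_nonneg (sq_nonneg _) (hz0 _ _)
    refine lt_of_le_of_ne (Finset.sum_nonneg hnn) fun h0 => ?_
    have h1 := (Finset.sum_eq_zero_iff_of_nonneg hnn).1 h0.symm
    refine hmix ρ (fun k => (hρ k).1) hρ1 fun o => ?_
    by_cases ho : Wz (xU ∅) o = 0
    · simp [hzAC o ho]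
    · have h2 := h1 o (Finset.mem_univ _)
      have h3 : ∑ k, ρ k * (Wz (xU {k}) o - Wz (xU ∅) o) = 0 := by
        rcases div_eq_zero_iff.1 h2 with h | h
        · exact pow_eq_zero_iff (two_ne_zero) |>.1 h
        · exact absurd h ho
      simp_rw [mul_sub] at h3
      rw [Finset.sum_sub_distrib, ← Finset.sum_mul, hρ1, one_mul] at h3
      linarith
  obtain ⟨hμ0, hμ1⟩ := hμ
  have hmax0 : ∀ k, 0 ≤ max ((1 + μ) * d k - (1 - μ) * a k) 0 := fun k => le_max_right _ _
  have hcM : ∀ k, 0 ≤ (1 - μ) * (ρ k * a k) := fun k =>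
    mul_nonneg (by linarith) (mul_nonneg (hρ k).1 (ha0 k))
  have hcL : ∀ k, 0 ≤ ρ k * max ((1 + μ) * d k - (1 - μ) * a k) 0 := fun k =>
    mul_nonneg (hρ k).1 (hmax0 k)
  -- sizes
  set M : ℕ → Fin K → ℕ := fun n k => ⌈Real.exp ((n : ℝ) * tn n * ((1 - μ) * (ρ k * a k)))⌉₊ with hMdef
  set L : ℕ → Fin K → ℕ := fun n k =>
    ⌈Real.exp ((n : ℝ) * tn n * (ρ k * max ((1 + μ) * d k - (1 - μ) * a k) 0))⌉₊ with hLdef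
  have hMb : ∀ n k, 0 < M n k ∧ Real.exp ((n : ℝ) * tn n * ((1 - μ) * (ρ k * a k))) ≤ M n k ∧
      (M n k : ℝ) ≤ 2 * Real.exp ((n : ℝ) * tn n * ((1 - μ) * (ρ k * a k))) := fun n k =>
    ceil_bounds _ (mul_nonneg (n_tn_nonneg n) (hcM k))
  have hLb : ∀ n k, 0 < L n k ∧
      Real.exp ((n : ℝ) * tn n * (ρ k * max ((1 + μ) * d k - (1 - μ) * a k) 0)) ≤ L n k ∧
      (L n k : ℝ) ≤ 2 * Real.exp ((n : ℝ) * tn n * (ρ k * max ((1 + μ) * d k - (1 - μ) * a k) 0)) :=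
    fun n k => ceil_bounds _ (mul_nonneg (n_tn_nonneg n) (hcL k))
  set B : Finset (Fin K) := Finset.univ.filter fun k => 0 < ρ k * a k with hBdef
  have hMB : ∀ n k, k ∉ B → M n k = 1 := by
    intro n k hk
    have h0 : ρ k * a k = 0 := by
      have h1 : ¬ 0 < ρ k * a k := by simpa [hBdef] using hk
      exact le_antisymm (not_lt.1 h1) (mul_nonneg (hρ k).1 (ha0 k))
    simp [hMdef, h0]
  set θ : ℕ → Fin K → ℝ := fun n k => Real.exp ((n : ℝ) * tn n * ((1 - μ / 2) * (ρ k * a k))) with hθ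
  -- missed detection exponents
  have hmiss : ∀ k, ∃ s : ℝ, 0 < s ∧ (k ∈ B → Tendsto (fun n : ℕ => θ n k ^ s *
      HM (bt ρ (tn n)) Wy (rr Wy k) k s ^ n) atTop (𝓝 0)) := by
    intro k
    by_cases hk : k ∈ B
    · have h1 : 0 < ρ k * a k := by simpa [hBdef] using hk
      obtain ⟨s, hs, h⟩ := miss_tendsto ρ hρ Wy hy0 hy1 k (hyAC k) (a k) μ rfl h1 hμ0
      exact ⟨s, hs, fun _ => h⟩
    · exact ⟨1, one_pos, fun h => absurd h hk⟩
  choose sy hsy hmiss using hmiss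
  have hfa : ∀ k ∈ B, Tendsto (fun n : ℕ => (M n k : ℝ) * ((θ n k)⁻¹ *
      FA (bt ρ (tn n)) Wy (rr Wy k) k ^ n)) atTop (𝓝 0) := by
    intro k hk
    have h1 : 0 < ρ k * a k := by simpa [hBdef] using hk
    exact fa_tendsto ρ hρ Wy hy0 hy1 k (hyAC k) (a k) μ h1 hμ0 (fun n => M n k)
      (fun n => (hMb n k).2.2)
  -- resolvability exponent
  have hsz : ∃ s : ℝ, (∀ k, ∑ o, Wz (xU {k}) o * (Wz (xU {k}) o / Wz (xU ∅) o) ^ s - 1 <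
      s * ((1 + μ) * d k)) ∧ 0 < s ∧ s ≤ 1 := by
    have h : ∀ᶠ s in 𝓝[>] (0 : ℝ), ∀ k, ∑ o, Wz (xU {k}) o * (Wz (xU {k}) o / Wz (xU ∅) o) ^ s - 1 <
        s * ((1 + μ) * d k) := by
      rw [Filter.eventually_all]
      intro k
      refine rpow_sum_deriv (Wz (xU {k})) (fun o => Wz (xU {k}) o / Wz (xU ∅) o) (hz1 _) ?_ _ ?_
      · intro o ho
        exact div_pos (lt_of_le_of_ne (hz0 _ _) (Ne.symm ho))
          (lt_of_le_of_ne (hz0 _ _) (fun h => ho (hzAC o h.symm _)))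
      · have h2 : ∑ o, Wz (xU {k}) o * Real.log (Wz (xU {k}) o / Wz (xU ∅) o) = d k := rfl
        rw [h2]; nlinarith [hd0 k]
    obtain ⟨s, h1, h2⟩ := (h.and ev_t).exists
    exact ⟨s, h1, h2⟩
  obtain ⟨s, hs, hs0, hs1⟩ := hsz
  set ν : ℕ → Fin K → ℝ := fun n k => if ρ k = 0 then 0 else ((M n k : ℝ) * L n k)⁻¹ with hνdef
  have hν0 : ∀ n k, 0 ≤ ν n k := by
    intro n k
    simp only [hνdef]
    split_ifs
    · exact le_rfl
    · positivity
  have hνb : ∀ n k, ν n k ≤ Real.exp (-((n : ℝ) * tn n * (ρ k * ((1 + μ) * d k)))) := by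
    intro n k
    simp only [hνdef]
    split_ifs
    · exact (Real.exp_pos _).le
    · rw [Real.exp_neg]
      refine inv_anti₀ (Real.exp_pos _) ?_
      refine le_trans ?_ (mul_le_mul (hMb n k).2.1 (hLb n k).2.1 (Real.exp_pos _).le
        (Nat.cast_nonneg _))
      rw [← Real.exp_add, ← mul_add]
      refine Real.exp_le_exp.2 (mul_le_mul_of_nonneg_left ?_ (n_tn_nonneg n))
      have h1 := mul_le_mul_of_nonneg_left (le_max_left ((1 + μ) * d k - (1 - μ) * a k) 0) (hρ k).1
      linarith
  have hνz : ∀ n k, ρ k = 0 → ν n k = 0 := fun n k h => by simp [hνdef, h]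
  have hres : ∀ T ∈ Finset.univ.erase (∅ : Finset (Fin K)), Tendsto (fun n : ℕ => ((n : ℝ) + 1) ^ 4 *
      ((∏ k ∈ T, ν n k) ^ s * GT (bt ρ (tn n)) Wz T s ^ n)) atTop (𝓝 0) := by
    intro T hT
    exact res_tendsto ρ hρ Wz hz0 hz1 hzAC s hs0 (fun k => (1 + μ) * d k) hs ν hν0 hνb hνz T
      (Finset.nonempty_iff_ne_empty.2 (Finset.ne_of_mem_erase hT))
  set R : ℕ → ℝ := fun n => ∑ k ∈ B, (θ n k ^ sy k * HM (bt ρ (tn n)) Wy (rr Wy k) k (sy k) ^ n +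
        (M n k : ℝ) * ((θ n k)⁻¹ * FA (bt ρ (tn n)) Wy (rr Wy k) k ^ n)) +
      ((n : ℝ) + 1) ^ 4 * (s⁻¹ * ∑ T ∈ Finset.univ.erase (∅ : Finset (Fin K)), (∏ k ∈ T, ν n k) ^ s *
        GT (bt ρ (tn n)) Wz T s ^ n) with hRdef
  have hR : Tendsto R atTop (𝓝 0) := by
    have h1 : Tendsto (fun n => ∑ k ∈ B, (θ n k ^ sy k * HM (bt ρ (tn n)) Wy (rr Wy k) k (sy k) ^ n +
        (M n k : ℝ) * ((θ n k)⁻¹ * FA (bt ρ (tn n)) Wy (rr Wy k) k ^ n))) atTop (𝓝 (∑ k ∈ B, (0 + 0))) :=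
      tendsto_finsetSum _ fun k hk => (hmiss k hk).add (hfa k hk)
    have h2 := (tendsto_finsetSum _ hres).const_mul s⁻¹
    have h3 := h1.add h2
    simp only [Finset.sum_const_zero, add_zero, mul_zero] at h3
    refine h3.congr fun n => ?_
    simp only [hRdef]
    rw [← Finset.mul_sum]; ring
  -- the good event for small parameters
  have hgood : ∀ᶠ t in 𝓝[>] (0 : ℝ), (0 < t ∧ t ≤ 1) ∧ ∀ o, (Wz (xU ∅) o ≠ 0 → Qav (bt ρ t) Wz o ≠ 0) ∧
      |Real.log (Qav (bt ρ t) Wz o / Wz (xU ∅) o)| ≤ 1 := by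
    refine ev_t.and ?_
    rw [Filter.eventually_all]
    intro o
    obtain ⟨hder, hval⟩ := Qav_deriv ρ Wz o
    have hc : Tendsto (fun t => Qav (bt ρ t) Wz o) (𝓝[>] (0 : ℝ)) (𝓝 (Wz (xU ∅) o)) := by
      have := hder.continuousAt.tendsto
      rw [hval] at this
      exact this.mono_left nhdsWithin_le_nhds
    by_cases ho : Wz (xU ∅) o = 0
    · refine Filter.Eventually.of_forall fun t => ⟨fun h => absurd ho h, ?_⟩
      simp [ho]
    · have h1 := hc.div_const (Wz (xU ∅) o)
      rw [div_self ho] at h1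
      have h2 := (h1.log one_ne_zero).abs
      rw [Real.log_one, abs_zero] at h2
      filter_upwards [hc.eventually_ne ho, h2.eventually_le_const one_pos] with t h3 h4
      exact ⟨fun _ => h3, h4⟩
  have hgn := tn_tendsto.eventually hgood
  have hcode : ∀ n, ∃ (enc : ∀ k, Fin (M n k) × Fin (L n k) → Fin n → Bool)
      (dec : (Fin n → Y) → (∀ k, Fin (L n k)) → ∀ k, Fin (M n k)),
      ((0 < tn n ∧ tn n ≤ 1) ∧ ∀ o, (Wz (xU ∅) o ≠ 0 → Qav (bt ρ (tn n)) Wz o ≠ 0) ∧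
      |Real.log (Qav (bt ρ (tn n)) Wz o / Wz (xU ∅) o)| ≤ 1) →
      Pe Wy (M n) (L n) enc dec + ((n : ℝ) + 1) ^ 4 * klDiv (Qhat Wz (M n) (L n) enc)
        (fun z : Fin n → Z => ∏ j, Qav (bt ρ (tn n)) Wz (z j)) ≤ R n := by
    intro n
    by_cases hg : (0 < tn n ∧ tn n ≤ 1) ∧ ∀ o, (Wz (xU ∅) o ≠ 0 → Qav (bt ρ (tn n)) Wz o ≠ 0) ∧
      |Real.log (Qav (bt ρ (tn n)) Wz o / Wz (xU ∅) o)| ≤ 1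
    · obtain ⟨enc, dec, h⟩ := one_code (n := n) Wy Wz hy0 hz0 hz1 hpos ρ hρ (tn n) hg.1.1.le hg.1.2
        (fun o ho => hzAC o (by
          by_contra h
          exact (hg.2 o).1 h ho))
        (M n) (L n) (fun k => (hMb n k).1) (fun k => (hLb n k).1) B (hMB n) (θ n)
        (fun k => Real.exp_pos _) sy hsy (ν n) (hν0 n)
        (by
          intro k
          by_cases hk : ρ k = 0
          · right; exact ⟨hνz n k hk, hk⟩
          · left; simp [hνdef, hk])
        s hs0 hs1 (((n : ℝ) + 1) ^ 4) (by positivity)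
      exact ⟨enc, dec, fun _ => h⟩
    · exact ⟨fun _ _ _ => false, fun _ _ k => ⟨0, (hMb n k).1⟩, fun h => absurd h hg⟩
  choose enc dec hcode using hcode
  set F : ℕ → ℝ := fun n => klDiv (Qhat Wz (M n) (L n) (enc n))
        (fun z : Fin n → Z => ∏ j, Qav (bt ρ (tn n)) Wz (z j)) with hFdef
  have hPe0 : ∀ n, 0 ≤ Pe Wy (M n) (L n) (enc n) (dec n) := by
    intro n
    unfold Pe
    refine mul_nonneg (by positivity) (Finset.sum_nonneg fun m _ => Finset.sum_nonneg fun l _ =>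
      Finset.sum_nonneg fun y _ => mul_nonneg (Finset.prod_nonneg fun j _ => hy0 _ _) ?_)
    split_ifs <;> norm_num
  have hstuff : ∀ᶠ n in atTop, 0 ≤ F n ∧ |deltaN Wz (M n) (L n) (enc n) -
      n * klDiv (Qav (bt ρ (tn n)) Wz) (Wz (xU ∅))| ≤ F n + n * (2 * Real.sqrt (F n)) := by
    filter_upwards [hgn] with n hg
    have : ∀ k, Nonempty (Fin (M n k) × Fin (L n k)) :=
      fun k => ⟨(⟨0, (hMb n k).1⟩, ⟨0, (hLb n k).1⟩)⟩
    have hb := bt_nonneg ρ hρ (tn n) hg.1.1.le hg.1.2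
    have hb1 : ∀ k, ∑ v, bt ρ (tn n) k v = 1 := fun k => bern_sum _
    have hP0 : ∀ z, 0 ≤ Qhat Wz (M n) (L n) (enc n) z := by
      intro z; rw [Qh_eq]; exact Qh_nonneg _ (WN_nonneg Wz hz0) _ _
    have hP1 : ∑ z, Qhat Wz (M n) (L n) (enc n) z = 1 := by
      rw [Qh_eq]; exact Qh_sum _ (WN_sum Wz hz1) _
    have hq0 := Qav_nonneg (bt ρ (tn n)) hb Wz hz0
    have hq1 := Qav_sum (bt ρ (tn n)) hb1 Wz hz1
    have hiff : ∀ o, Wz (xU ∅) o = 0 ↔ Qav (bt ρ (tn n)) Wz o = 0 := by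
      intro o
      constructor
      · intro ho; unfold Qav; simp [hzAC o ho]
      · intro ho; by_contra h; exact (hg.2 o).1 h ho
    have hac : ∀ z : Fin n → Z, ∏ j, Qav (bt ρ (tn n)) Wz (z j) = 0 →
        Qhat Wz (M n) (L n) (enc n) z = 0 := by
      intro z hz
      rw [Qh_eq]
      refine Qh_ac _ _ _ fun x => ?_
      obtain ⟨j, _, hj⟩ := Finset.prod_eq_zero_iff.1 hz
      unfold WN prodChannel
      exact Finset.prod_eq_zero (Finset.mem_univ j) (hzAC _ ((hiff _).2 hj) _)
    refine ⟨?_, ?_⟩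
    · refine kl_nonneg' _ _ hP0 hP1 (fun z => Finset.prod_nonneg fun j _ => hq0 _) ?_ hac
      rw [sum_prod_pow, hq1, one_pow]
    · exact delta_decomp _ _ _ hP0 hP1 hq0 hq1 hiff hac (fun o => (hg.2 o).2)
  have hFR : ∀ᶠ n : ℕ in atTop, ((n : ℝ) + 1) ^ 4 * F n ≤ R n := by
    filter_upwards [hgn] with n hg
    have := hcode n hg
    have := hPe0 n
    simp only [hFdef]
    linarith
  have hdl := delta_lim (fun t => klDiv (Qav (bt ρ t) Wz) (Wz (xU ∅))) (chiRho Wz ρ)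
    (kl_lim ρ Wz hz0 hz1 hzAC) (fun n => deltaN Wz (M n) (L n) (enc n)) F R
    (hstuff.mono fun n h => h.1) hR hFR (hstuff.mono fun n h => h.2)
  refine ⟨M, L, enc, dec, fun n k => (hMb n k).1, fun n k => (hLb n k).1, ?_, ?_, ?_, ?_⟩
  · refine tendsto_of_tendsto_of_tendsto_of_le_of_le' tendsto_const_nhds hR
      (Filter.Eventually.of_forall hPe0) ?_
    filter_upwards [hgn, hstuff] with n hg hst
    have h1 := hcode n hg
    have h2 : 0 ≤ ((n : ℝ) + 1) ^ 4 * F n := mul_nonneg (by positivity) hst.1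
    simp only [hFdef] at h2
    linarith
  · have h := hdl.mul n_tn_sq
    rw [mul_zero] at h
    refine h.congr' ?_
    filter_upwards [eventually_ge_atTop 1] with n hn
    have ht := tn_pos hn
    have hn' : (0 : ℝ) < n := by exact_mod_cast hn
    exact div_mul_cancel₀ _ (by positivity)
  · intro k
    have h := ratio_lim (chiRho Wz ρ) _ hχ _ _ hdl (log_ceil_lim _ (hcM k))
    convert! h using 2
    ring
  · intro k
    have h := ratio_lim (chiRho Wz ρ) _ hχ _ _ hdl (log_ceil_lim _ (hcL k))
    convert! h using 2
    ring
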